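/- Let G be a reduced finite simple graph that is not 3-connected, i.e., G is 2-connected, every edge e of G satisfies s(G − e) < s(G), every vertex of G has degree in {3,4,5}, and G has a 2-cutset. Then φ(G) ≥ (16/3)·s(G), where φ(G) = Σ_{v ∈ V(G)} φ(deg_G(v)) and φ(d) = 0 for d ∈ {0,1,2}, φ(3) = 4/3, and φ(d) = d/2 for d ≥ 4. -/

import Mathlib

open SimpleGraph

/-- `G` has a `K₄` minor (branch-set formulation: four nonempty, pairwise disjoint,
connected branch sets with an edge between every two of them). -/
def HasK4Minor {V : Type*} (G : SimpleGraph V) : Prop :=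
  ∃ B : Fin 4 → Set V,
    (∀ i, (B i).Nonempty) ∧
    (∀ i, (G.induce (B i)).Connected) ∧
    (∀ i j, i ≠ j → Disjoint (B i) (B j)) ∧
    (∀ i j, i ≠ j → ∃ u ∈ B i, ∃ v ∈ B j, G.Adj u v)

/-- `X` is a transversal of `G`: the graph `G − X` has no `K₄` minor. -/
def IsTransversal {V : Type*} (G : SimpleGraph V) (X : Finset V) : Prop :=
  ¬ HasK4Minor (G.induce ((↑X : Set V)ᶜ))

/-- `s(G)`: the minimum size of a transversal of `G`. -/
noncomputable def transNum {V : Type*} (G : SimpleGraph V) : ℕ :=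
  sInf {n : ℕ | ∃ X : Finset V, X.card = n ∧ IsTransversal G X}

/-- The potential function: `φ(d) = 0` for `d ∈ {0,1,2}`, `φ(3) = 4/3`, and
`φ(d) = d/2` for `d ≥ 4`. -/
noncomputable def phi (d : ℕ) : ℝ :=
  if d ≤ 2 then 0 else if d = 3 then 4 / 3 else (d : ℝ) / 2

/-- The potential of a graph: `φ(G) = Σ_{v ∈ V(G)} φ(deg_G(v))`. -/
noncomputable def phiSum {V : Type*} [Fintype V] (G : SimpleGraph V) : ℝ :=
  ∑ v : V, phi ((G.neighborSet v).ncard)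

/-!
Work with `weight = 6 * φ`, so that the claim becomes `32 * s(G) ≤ potential G`. Up to an error of
at most `6`, this inequality holds for every connected graph of maximum degree at most five, and the
error shrinks if some or all degrees are small (`PotentialBound`). The proof is by induction on the
number of edges. Vertices of degree one or two, noncritical edges and cut vertices reduce to smaller
graphs. A 2-cut `{u, v}` of a reduced graph is handled by deleting `u` and giving `v` to one of the
two sides: the weight lost at the vertices of the cut pays both for `u` and for the errors of the
two sides, so no error remains, which is the theorem. The induction also has to pass through
3-connected graphs. There one deletes a vertex of degree four or five, or a small set of vertices
around it. A vertex of degree at least three that loses one or two edges loses at least three units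
of weight per edge, and the surplus (`excess`) covers the deleted vertices unless the degrees near a
vertex of degree five follow a rigid pattern, which a final deletion excludes.
-/

namespace K4Transversal

open scoped Classical

section Models

variable {V : Type*} {G H : SimpleGraph V}

lemma connected_iff_forall_exists_adj :
    G.Connected ↔ Nonempty V ∧
      ∀ S : Set V, S.Nonempty → Sᶜ.Nonempty → ∃ a ∈ S, ∃ b ∈ Sᶜ, G.Adj a b := by
  refine ⟨fun hG => ⟨hG.nonempty, ?_⟩, fun ⟨hV, hcut⟩ => ⟨fun x y => ?_⟩⟩
  · rintro S ⟨x, hx⟩ ⟨y, hy⟩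
    obtain ⟨p⟩ := hG.preconnected x y
    obtain ⟨d, -, hfst, hsnd⟩ := p.exists_boundary_dart S hx hy
    exact ⟨d.fst, hfst, d.snd, hsnd, d.adj⟩
  · by_contra hxy
    obtain ⟨a, ha, b, hb, hab⟩ := hcut {z | G.Reachable x z} ⟨x, .refl x⟩ ⟨y, hxy⟩
    exact hb (Reachable.trans ha hab.reachable)

lemma induce_connected_iff_forall_exists_adj {B : Set V} :
    (G.induce B).Connected ↔ B.Nonempty ∧
      ∀ S ⊆ B, S.Nonempty → (B \ S).Nonempty → ∃ a ∈ S, ∃ b ∈ B \ S, G.Adj a b := by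
  rw [connected_iff_forall_exists_adj, Set.nonempty_coe_sort]
  refine and_congr_right fun _ => ⟨fun h S hS ⟨x, hx⟩ ⟨y, hyB, hy⟩ => ?_,
    fun h S ⟨x, hx⟩ ⟨y, hy⟩ => ?_⟩
  · obtain ⟨a, ha, b, hb, hab⟩ := h (Subtype.val ⁻¹' S) ⟨⟨x, hS hx⟩, hx⟩ ⟨⟨y, hyB⟩, hy⟩
    exact ⟨a, ha, b, ⟨b.2, hb⟩, hab⟩
  · obtain ⟨a, ⟨a, ha, rfl⟩, b, ⟨hbB, hb⟩, hab⟩ := h (Subtype.val '' S) (by simp)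
      ⟨x, x, hx, rfl⟩ ⟨y, y.2, by simpa using hy⟩
    exact ⟨a, ha, ⟨b, hbB⟩, fun hbS => hb ⟨_, hbS, rfl⟩, hab⟩

/-- The branch sets `B 0, …, B 3` form a model of `K₄` in `G`. -/
structure IsK4Model (G : SimpleGraph V) (B : Fin 4 → Set V) : Prop where
  connected : ∀ i, (G.induce (B i)).Connected
  disjoint : ∀ i j, i ≠ j → Disjoint (B i) (B j)
  exists_adj : ∀ i j, i ≠ j → ∃ u ∈ B i, ∃ v ∈ B j, G.Adj u v

lemma IsK4Model.nonempty {B : Fin 4 → Set V} (hB : IsK4Model G B) (i : Fin 4) : (B i).Nonempty :=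
  (induce_connected_iff_forall_exists_adj.1 (hB.connected i)).1

lemma IsK4Model.exists_adj_sdiff {B : Fin 4 → Set V} (hB : IsK4Model G B) {i : Fin 4} {S : Set V}
    (hSB : S ⊆ B i) (hS : S.Nonempty) (hBS : (B i \ S).Nonempty) :
    ∃ a ∈ S, ∃ b ∈ B i \ S, G.Adj a b :=
  (induce_connected_iff_forall_exists_adj.1 (hB.connected i)).2 S hSB hS hBS

lemma IsK4Model.eq_of_mem {B : Fin 4 → Set V} (hB : IsK4Model G B) {i j : Fin 4} {x : V}
    (hi : x ∈ B i) (hj : x ∈ B j) : i = j :=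
  not_imp_comm.1 (hB.disjoint i j) (Set.not_disjoint_iff.2 ⟨x, hi, hj⟩)

lemma IsK4Model.mono {B : Fin 4 → Set V} (hB : IsK4Model G B)
    (h : ∀ i j, ∀ a ∈ B i, ∀ b ∈ B j, G.Adj a b → H.Adj a b) : IsK4Model H B where
  connected i := (hB.connected i).mono fun a b hab => h i i a a.2 b b.2 hab
  disjoint := hB.disjoint
  exists_adj i j hij := by
    obtain ⟨u, hu, v, hv, huv⟩ := hB.exists_adj i j hij
    exact ⟨u, hu, v, hv, h i j u hu v hv huv⟩

lemma IsK4Model.exists_adj_of_mem {B : Fin 4 → Set V} (hB : IsK4Model G B) {i : Fin 4} {x : V}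
    (hx : x ∈ B i) : ∃ j, ∃ y ∈ B j, G.Adj x y := by
  by_cases h : (B i \ {x}).Nonempty
  · obtain ⟨_, rfl, b, hb, hab⟩ := hB.exists_adj_sdiff (Set.singleton_subset_iff.2 hx) ⟨x, rfl⟩ h
    exact ⟨i, b, hb.1, hab⟩
  · obtain ⟨j, hj⟩ := exists_ne i
    obtain ⟨u, hu, v, hv, huv⟩ := hB.exists_adj i j hj.symm
    have hux : u = x := by by_contra hux; exact h ⟨u, hu, hux⟩
    exact ⟨j, v, hv, hux ▸ huv⟩

lemma hasK4Minor_induce_iff {Y : Set V} :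
    HasK4Minor (G.induce Y) ↔ ∃ B, IsK4Model G B ∧ ∀ i, B i ⊆ Y := by
  have induce_image (B : Set Y) : ((G.induce Y).induce B).Connected ↔
      (G.induce (Subtype.val '' B)).Connected :=
    Iso.connected_iff ⟨Equiv.Set.image _ B Subtype.val_injective, Iff.rfl⟩
  constructor
  · rintro ⟨B, -, hconn, hdisj, hadj⟩
    refine ⟨fun i => Subtype.val '' B i, ⟨fun i => (induce_image _).1 (hconn i),
      fun i j hij => (Set.disjoint_image_iff Subtype.val_injective).2 (hdisj i j hij),
      fun i j hij => ?_⟩, fun i => by simp⟩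
    obtain ⟨u, hu, v, hv, huv⟩ := hadj i j hij
    exact ⟨u, ⟨u, hu, rfl⟩, v, ⟨v, hv, rfl⟩, huv⟩
  · rintro ⟨B, hB, hBY⟩
    have image_preimage (i : Fin 4) : Subtype.val '' (Subtype.val ⁻¹' B i : Set Y) = B i := by
      simpa using hBY i
    refine ⟨fun i => Subtype.val ⁻¹' B i, fun i => ?_, fun i => ?_,
      fun i j hij => (hB.disjoint i j hij).preimage _, fun i j hij => ?_⟩
    · obtain ⟨x, hx⟩ := hB.nonempty i
      exact ⟨⟨x, hBY i hx⟩, hx⟩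
    · rw [induce_image, image_preimage]
      exact hB.connected i
    · obtain ⟨u, hu, v, hv, huv⟩ := hB.exists_adj i j hij
      exact ⟨⟨u, hBY i hu⟩, hu, ⟨v, hBY j hv⟩, hv, huv⟩

lemma isTransversal_iff {X : Finset V} :
    IsTransversal G X ↔ ∀ B, IsK4Model G B → ∃ i, ∃ x ∈ B i, x ∈ X := by
  simp only [IsTransversal, hasK4Minor_induce_iff, not_exists, not_and, Set.not_subset,
    Set.mem_compl_iff, not_not, not_forall, Finset.mem_coe]

lemma transNum_le_card {X : Finset V} (hX : IsTransversal G X) : transNum G ≤ X.card :=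
  Nat.sInf_le ⟨X, rfl, hX⟩

end Models

section Operations

variable {V : Type*} {G H : SimpleGraph V}

/-- The subgraph of `G` induced by `S`, on the same vertex type: the vertices outside `S` are kept
as isolated vertices, so that inductions run over the graphs on a fixed type. -/
def restrict (G : SimpleGraph V) (S : Finset V) : SimpleGraph V where
  Adj a b := G.Adj a b ∧ a ∈ S ∧ b ∈ S
  symm := ⟨fun _ _ h => ⟨h.1.symm, h.2.2, h.2.1⟩⟩
  loopless := ⟨fun _ h => G.loopless.irrefl _ h.1⟩

lemma restrict_adj {S : Finset V} {a b : V} :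
    (restrict G S).Adj a b ↔ G.Adj a b ∧ a ∈ S ∧ b ∈ S := Iff.rfl

lemma restrict_le (S : Finset V) : restrict G S ≤ G := fun _ _ h => h.1

lemma restrict_restrict (G : SimpleGraph V) (S T : Finset V) :
    restrict (restrict G S) T = restrict G (S ∩ T) := by
  ext a b
  simp only [restrict_adj, Finset.mem_inter]
  tauto

lemma deleteEdges_singleton_adj {a b x y : V} : (G.deleteEdges {s(a, b)}).Adj x y ↔
    G.Adj x y ∧ ¬(x = a ∧ y = b) ∧ ¬(x = b ∧ y = a) := by
  simp only [deleteEdges_adj, Set.mem_singleton_iff, Sym2.eq_iff, not_or]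

lemma IsTransversal.restrict {X : Finset V} (hX : IsTransversal G X) (S : Finset V) :
    IsTransversal (restrict G S) (X ∩ S) := by
  rw [isTransversal_iff] at hX ⊢
  intro B hB
  obtain ⟨i, x, hxB, hxX⟩ := hX B (hB.mono fun _ _ _ _ _ _ h => h.1)
  obtain ⟨_, _, _, hxy⟩ := hB.exists_adj_of_mem hxB
  exact ⟨i, x, hxB, Finset.mem_inter.2 ⟨hxX, hxy.2.1⟩⟩

lemma transNum_restrict_le {X : Finset V} (hX : IsTransversal G X) (S : Finset V) :
    transNum (restrict G S) ≤ (X ∩ S).card :=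
  transNum_le_card (IsTransversal.restrict hX S)

lemma transNum_eq_zero_of_forall_not_adj (h : ∀ a b, ¬ G.Adj a b) : transNum G = 0 := by
  have empty_isTransversal : IsTransversal G ∅ := isTransversal_iff.2 fun B hB => by
    obtain ⟨u, -, v, -, huv⟩ := hB.exists_adj 0 1 (by decide)
    exact absurd huv (h u v)
  exact Nat.le_zero.1 (transNum_le_card empty_isTransversal)

variable [Finite V]

lemma exists_isTransversal_card_eq (G : SimpleGraph V) :
    ∃ X : Finset V, X.card = transNum G ∧ IsTransversal G X := by
  have := Fintype.ofFinite V
  have univ_isTransversal : IsTransversal G Finset.univ := isTransversal_iff.2 fun B hB =>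
    ⟨0, (hB.nonempty 0).some, (hB.nonempty 0).some_mem, Finset.mem_univ _⟩
  exact Nat.sInf_mem (s := {n | ∃ X : Finset V, X.card = n ∧ IsTransversal G X})
    ⟨_, Finset.univ, rfl, univ_isTransversal⟩

lemma transNum_mono (h : G ≤ H) : transNum G ≤ transNum H := by
  obtain ⟨X, hcard, hX⟩ := exists_isTransversal_card_eq H
  rw [← hcard]
  rw [isTransversal_iff] at hX
  exact transNum_le_card (isTransversal_iff.2 fun B hB =>
    hX B (hB.mono fun _ _ _ _ _ _ hab => h hab))

lemma transNum_restrict_mono (G : SimpleGraph V) {S T : Finset V} (hST : S ⊆ T) :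
    transNum (restrict G S) ≤ transNum (restrict G T) :=
  transNum_mono fun _ _ hab => ⟨hab.1, hST hab.2.1, hST hab.2.2⟩

lemma transNum_restrict_restrict_le (G : SimpleGraph V) {S T U : Finset V} (h : S ∩ T ⊆ U) :
    transNum (restrict (restrict G S) T) ≤ transNum (restrict G U) := by
  rw [restrict_restrict]
  exact transNum_restrict_mono G h

lemma transNum_restrict_add_transNum_restrict_le (G : SimpleGraph V) {S T : Finset V}
    (hST : Disjoint S T) : transNum (restrict G S) + transNum (restrict G T) ≤ transNum G := by
  obtain ⟨X, hcard, hX⟩ := exists_isTransversal_card_eq G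
  calc transNum (restrict G S) + transNum (restrict G T)
      ≤ (X ∩ S).card + (X ∩ T).card :=
        add_le_add (transNum_restrict_le hX S) (transNum_restrict_le hX T)
    _ = (X ∩ S ∪ X ∩ T).card := (Finset.card_union_of_disjoint
        (hST.mono Finset.inter_subset_right Finset.inter_subset_right)).symm
    _ ≤ X.card := Finset.card_le_card
        (Finset.union_subset Finset.inter_subset_left Finset.inter_subset_left)
    _ = transNum G := hcard

lemma transNum_le_card_add_restrict [Fintype V] (G : SimpleGraph V) (D : Finset V) :
    transNum G ≤ D.card + transNum (restrict G Dᶜ) := by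
  obtain ⟨X, hcard, hX⟩ := exists_isTransversal_card_eq (restrict G Dᶜ)
  rw [isTransversal_iff] at hX
  have union_isTransversal : IsTransversal G (D ∪ X) := by
    refine isTransversal_iff.2 fun B hB => ?_
    by_contra! havoid
    have mem_compl (i : Fin 4) (a : V) (ha : a ∈ B i) : a ∈ Dᶜ :=
      Finset.mem_compl.2 fun haD => havoid i a ha (Finset.mem_union_left _ haD)
    obtain ⟨i, y, hyB, hyX⟩ := hX B (hB.mono fun i j a ha b hb hab =>
      ⟨hab, mem_compl i a ha, mem_compl j b hb⟩)
    exact havoid i y hyB (Finset.mem_union_right _ hyX)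
  have := transNum_le_card union_isTransversal
  have := Finset.card_union_le D X
  omega

lemma transNum_le_one_add_restrict [Fintype V] (G : SimpleGraph V) (x : V) :
    transNum G ≤ 1 + transNum (restrict G {x}ᶜ) :=
  transNum_le_card_add_restrict G {x}

end Operations

section OneSum

variable {V : Type*} {G : SimpleGraph V} {S T : Finset V} {v : V}

/-- `G` is the union of its subgraphs induced by `S` and `T`, which share at most the
vertex `v`. -/
structure IsOneSum (G : SimpleGraph V) (S T : Finset V) (v : V) : Prop where
  mem_or_mem : ∀ a b, G.Adj a b → (a ∈ S ∧ b ∈ S) ∨ (a ∈ T ∧ b ∈ T)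
  eq_of_mem : ∀ x, x ∈ S → x ∈ T → x = v

lemma IsOneSum.symm (h : IsOneSum G S T v) : IsOneSum G T S v :=
  ⟨fun a b hab => (h.mem_or_mem a b hab).symm, fun x hT hS => h.eq_of_mem x hS hT⟩

lemma IsOneSum.mem_of_adj (h : IsOneSum G S T v) {a b : V} (hab : G.Adj a b) (ha : a ∈ S)
    (hav : a ≠ v) : b ∈ S :=
  (h.mem_or_mem a b hab).elim And.right fun hT => absurd (h.eq_of_mem a ha hT.1) hav

lemma IsOneSum.subset_or_subset (h : IsOneSum G S T v) {B : Fin 4 → Set V} (hB : IsK4Model G B)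
    {i : Fin 4} (hv : v ∉ B i) : B i ⊆ S ∨ B i ⊆ T := by
  by_contra! hcon
  obtain ⟨y, hyB, hyS⟩ := Set.not_subset.1 hcon.1
  obtain ⟨z, hzB, hzT⟩ := Set.not_subset.1 hcon.2
  have hzS : z ∈ S := by
    obtain ⟨_, w, -, hzw⟩ := hB.exists_adj_of_mem hzB
    exact ((h.mem_or_mem z w hzw).resolve_right fun hT => hzT hT.1).1
  obtain ⟨a, ⟨haB, haS⟩, b, ⟨hbB, hb⟩, hab⟩ := hB.exists_adj_sdiff
    (Set.inter_subset_left (s := B i) (t := S)) ⟨z, hzB, hzS⟩ ⟨y, hyB, fun hy => hyS hy.2⟩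
  exact hb ⟨hbB, h.mem_of_adj hab haS fun hav => hv (hav ▸ haB)⟩

lemma IsOneSum.isK4Model_inter (h : IsOneSum G S T v) {B : Fin 4 → Set V} (hB : IsK4Model G B)
    (hBS : ∀ i, v ∉ B i → B i ⊆ S) : IsK4Model (restrict G S) fun i => B i ∩ S := by
  have exists_adj_inter (i j : Fin 4) (hij : i ≠ j) :
      ∃ a ∈ B i ∩ S, ∃ b ∈ B j ∩ S, (restrict G S).Adj a b := by
    obtain ⟨a, ha, b, hb, hab⟩ := hB.exists_adj i j hij
    have habS : a ∈ S ∧ b ∈ S := by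
      by_cases hv : v ∈ B i
      · have hvj : v ∉ B j := fun hvj => hij (hB.eq_of_mem hv hvj)
        have hbS := hBS j hvj hb
        exact ⟨h.mem_of_adj hab.symm hbS fun hbv => hvj (hbv ▸ hb), hbS⟩
      · have haS := hBS i hv ha
        exact ⟨haS, h.mem_of_adj hab haS fun hav => hv (hav ▸ ha)⟩
    exact ⟨a, ⟨ha, habS.1⟩, b, ⟨hb, habS.2⟩, hab, habS⟩
  refine ⟨fun i => induce_connected_iff_forall_exists_adj.2 ⟨?_, fun U hU hne hne' => ?_⟩,
    fun i j hij => (hB.disjoint i j hij).mono Set.inter_subset_left Set.inter_subset_left,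
    exists_adj_inter⟩
  · obtain ⟨j, hj⟩ := exists_ne i
    obtain ⟨a, ha, -⟩ := exists_adj_inter i j hj.symm
    exact ⟨a, ha⟩
  · have cross (W : Set V) (hW : W ⊆ B i ∩ S) (hv : v ∉ W) (hne : W.Nonempty)
        (hne' : ((B i ∩ S) \ W).Nonempty) :
        ∃ a ∈ W, ∃ b ∈ (B i ∩ S) \ W, (restrict G S).Adj a b := by
      obtain ⟨a, ha, b, hb, hab⟩ := hB.exists_adj_sdiff (hW.trans Set.inter_subset_left) hne
        (hne'.mono fun x hx => ⟨hx.1.1, hx.2⟩)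
      have hbS : b ∈ S := h.mem_of_adj hab (hW ha).2 fun hav => hv (hav ▸ ha)
      exact ⟨a, ha, b, ⟨⟨hb.1, hbS⟩, hb.2⟩, hab, (hW ha).2, hbS⟩
    by_cases hv : v ∈ U
    · have sdiff_sdiff : (B i ∩ S) \ ((B i ∩ S) \ U) = U := Set.sdiff_sdiff_cancel_left hU
      obtain ⟨a, ha, b, hb, hab⟩ := cross _ Set.sdiff_subset (fun hv' => hv'.2 hv) hne'
        (sdiff_sdiff.symm ▸ hne)
      exact ⟨b, sdiff_sdiff ▸ hb, a, ha, hab.symm⟩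
    · exact cross U hU hv hne hne'

lemma IsOneSum.isK4Model_inter_of_subset (h : IsOneSum G S T v) {B : Fin 4 → Set V}
    (hB : IsK4Model G B) {i : Fin 4} (hi : v ∉ B i) (hiS : B i ⊆ S) :
    IsK4Model (restrict G S) fun i => B i ∩ S := by
  refine h.isK4Model_inter hB fun j hj => ?_
  by_cases hij : i = j
  · exact hij ▸ hiS
  refine (h.subset_or_subset hB hj).resolve_right fun hjT => ?_
  obtain ⟨a, ha, b, hb, hab⟩ := hB.exists_adj i j hij
  have hbS : b ∈ S := h.mem_of_adj hab (hiS ha) fun hav => hi (hav ▸ ha)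
  exact hj (h.eq_of_mem b hbS (hjT hb) ▸ hb)

lemma IsOneSum.transNum_le [Finite V] (h : IsOneSum G S T v) :
    transNum G ≤ transNum (restrict G S) + transNum (restrict G T) := by
  obtain ⟨X, hXcard, hX⟩ := exists_isTransversal_card_eq (restrict G S)
  obtain ⟨Y, hYcard, hY⟩ := exists_isTransversal_card_eq (restrict G T)
  rw [isTransversal_iff] at hX hY
  have union_isTransversal : IsTransversal G (X ∪ Y) := by
    refine isTransversal_iff.2 fun B hB => ?_
    obtain ⟨i, hi⟩ : ∃ i, v ∉ B i := by
      by_contra! hv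
      exact absurd (hB.eq_of_mem (hv 0) (hv 1)) (by decide)
    rcases h.subset_or_subset hB hi with hiS | hiT
    · obtain ⟨j, x, hxB, hxX⟩ := hX _ (h.isK4Model_inter_of_subset hB hi hiS)
      exact ⟨j, x, hxB.1, Finset.mem_union_left _ hxX⟩
    · obtain ⟨j, x, hxB, hxY⟩ := hY _ (h.symm.isK4Model_inter_of_subset hB hi hiT)
      exact ⟨j, x, hxB.1, Finset.mem_union_right _ hxY⟩
  have := transNum_le_card union_isTransversal
  have := Finset.card_union_le X Y
  omega

end OneSum

section Suppress

variable {V : Type*} {G : SimpleGraph V} {v p q : V}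

lemma IsK4Model.sdiff_singleton_nonempty {B : Fin 4 → Set V} (hB : IsK4Model G B)
    (hN : ∀ x, G.Adj v x → x = p ∨ x = q) (i : Fin 4) : (B i \ {v}).Nonempty := by
  by_contra hcon
  have eq_of_mem (x : V) (hx : x ∈ B i) : x = v := by
    by_contra hxv
    exact hcon ⟨x, hx, hxv⟩
  have mem_or_mem (j : Fin 4) (hj : i ≠ j) : p ∈ B j ∨ q ∈ B j := by
    obtain ⟨a, ha, b, hb, hab⟩ := hB.exists_adj i j hj
    rcases hN b (eq_of_mem a ha ▸ hab) with rfl | rfl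
    exacts [.inl hb, .inr hb]
  have exists_three : ∃ j k l : Fin 4, i ≠ j ∧ i ≠ k ∧ i ≠ l ∧ j ≠ k ∧ j ≠ l ∧ k ≠ l := by
    fin_cases i <;> decide
  obtain ⟨j, k, l, hj, hk, hl, hjk, hjl, hkl⟩ := exists_three
  rcases mem_or_mem j hj with hj | hj <;> rcases mem_or_mem k hk with hk | hk <;>
    rcases mem_or_mem l hl with hl | hl <;>
    first
      | exact hjk (hB.eq_of_mem hj hk)
      | exact hjl (hB.eq_of_mem hj hl)
      | exact hkl (hB.eq_of_mem hk hl)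

variable [Fintype V]

/-- Suppress the vertex `v`: isolate it and join `p` to `q` by an edge (if `p ≠ q`). It is applied
to a vertex `v` all of whose neighbours are among `p` and `q`. -/
noncomputable def suppress (G : SimpleGraph V) (v p q : V) : SimpleGraph V :=
  restrict G {v}ᶜ ⊔ edge p q

lemma suppress_adj {a b : V} : (suppress G v p q).Adj a b ↔
    (G.Adj a b ∧ a ≠ v ∧ b ≠ v) ∨ ((a = p ∧ b = q ∨ a = q ∧ b = p) ∧ a ≠ b) := by
  simp only [suppress, sup_adj, restrict_adj, Finset.mem_compl, Finset.mem_singleton, edge_adj,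
    ne_eq]

lemma suppress_adj_of_adj_of_adj (hN : ∀ x, G.Adj v x → x = p ∨ x = q) {a b : V}
    (ha : G.Adj v a) (hb : G.Adj v b) (hab : a ≠ b) : (suppress G v p q).Adj a b := by
  have := hN a ha
  have := hN b hb
  rw [suppress_adj]
  grind

lemma suppress_induce_sdiff_connected (hN : ∀ x, G.Adj v x → x = p ∨ x = q) {B : Set V}
    (hB : (G.induce B).Connected) (hne : (B \ {v}).Nonempty) :
    ((suppress G v p q).induce (B \ {v})).Connected := by
  rw [induce_connected_iff_forall_exists_adj] at hB ⊢
  refine ⟨hne, fun S hS hS₁ ⟨c, hc, hcS⟩ => ?_⟩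
  obtain ⟨a, ha, b, ⟨hb, hbS⟩, hab⟩ := hB.2 S (hS.trans Set.sdiff_subset) hS₁ ⟨c, hc.1, hcS⟩
  by_cases hbv : b = v
  · subst hbv
    obtain ⟨c, hc, d, ⟨hd, hdS⟩, hcd⟩ := hB.2 ((B \ {b}) \ S)
      (Set.sdiff_subset.trans Set.sdiff_subset) ⟨c, hc, hcS⟩ ⟨b, hb, fun h => h.1.2 rfl⟩
    by_cases hdb : d = b
    · subst hdb
      exact ⟨a, ha, c, hc, suppress_adj_of_adj_of_adj hN hab.symm hcd.symm fun h => hc.2 (h ▸ ha)⟩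
    · have hdS : d ∈ S := by_contra fun h => hdS ⟨⟨hd, hdb⟩, h⟩
      exact ⟨d, hdS, c, hc, suppress_adj.2 (.inl ⟨hcd.symm, hdb, hc.1.2⟩)⟩
  · exact ⟨a, ha, b, ⟨⟨hb, hbv⟩, hbS⟩, suppress_adj.2 (.inl ⟨hab, (hS ha).2, hbv⟩)⟩

lemma IsK4Model.suppress {B : Fin 4 → Set V} (hB : IsK4Model G B)
    (hN : ∀ x, G.Adj v x → x = p ∨ x = q) :
    IsK4Model (suppress G v p q) fun i => B i \ {v} := by
  have exists_adj_of_mem {i j : Fin 4} (hij : i ≠ j) {b : V} (hv : v ∈ B i) (hb : b ∈ B j)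
      (hvb : G.Adj v b) : ∃ c ∈ B i \ {v}, (K4Transversal.suppress G v p q).Adj c b := by
    obtain ⟨_, rfl, c, hc, hvc⟩ := hB.exists_adj_sdiff (Set.singleton_subset_iff.2 hv) ⟨v, rfl⟩
      (hB.sdiff_singleton_nonempty hN i)
    exact ⟨c, hc, suppress_adj_of_adj_of_adj hN hvc hvb fun h => hij (hB.eq_of_mem hc.1 (h ▸ hb))⟩
  refine ⟨fun i => suppress_induce_sdiff_connected hN (hB.connected i)
      (hB.sdiff_singleton_nonempty hN i),
    fun i j hij => (hB.disjoint i j hij).mono Set.sdiff_subset Set.sdiff_subset, fun i j hij => ?_⟩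
  obtain ⟨a, ha, b, hb, hab⟩ := hB.exists_adj i j hij
  by_cases hav : a = v
  · subst hav
    obtain ⟨c, hc, hcb⟩ := exists_adj_of_mem hij ha hb hab
    exact ⟨c, hc, b, ⟨hb, hab.ne'⟩, hcb⟩
  by_cases hbv : b = v
  · subst hbv
    obtain ⟨c, hc, hca⟩ := exists_adj_of_mem hij.symm hb ha hab.symm
    exact ⟨a, ⟨ha, hav⟩, c, hc, hca.symm⟩
  exact ⟨a, ⟨ha, hav⟩, b, ⟨hb, hbv⟩, suppress_adj.2 (.inl ⟨hab, hav, hbv⟩)⟩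

lemma transNum_le_suppress (hN : ∀ x, G.Adj v x → x = p ∨ x = q) :
    transNum G ≤ transNum (suppress G v p q) := by
  obtain ⟨X, hcard, hX⟩ := exists_isTransversal_card_eq (suppress G v p q)
  rw [← hcard]
  rw [isTransversal_iff] at hX
  refine transNum_le_card (isTransversal_iff.2 fun B hB => ?_)
  obtain ⟨i, x, hx, hxX⟩ := hX _ (hB.suppress hN)
  exact ⟨i, x, hx.1, hxX⟩

lemma transNum_le_restrict_compl_of_leaf (hN : ∀ x, G.Adj v x → x = p) :
    transNum G ≤ transNum (restrict G {v}ᶜ) := by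
  have : suppress G v p p = restrict G {v}ᶜ := by
    ext a b
    simp only [suppress_adj, restrict_adj, Finset.mem_compl, Finset.mem_singleton]
    grind
  exact this ▸ transNum_le_suppress fun x hx => .inl (hN x hx)

end Suppress

section Bridge

variable {V : Type*} {G : SimpleGraph V} {S : Finset V} {a b : V}

/-- `ab` is the only edge of `G` leaving `S`, with `a` inside and `b` outside. -/
structure IsBridgeCut (G : SimpleGraph V) (S : Finset V) (a b : V) : Prop where
  adj : G.Adj a b
  mem : a ∈ S
  notMem : b ∉ S
  eq_and_eq : ∀ x ∈ S, ∀ y ∉ S, G.Adj x y → x = a ∧ y = b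

lemma IsBridgeCut.compl [Fintype V] (h : IsBridgeCut G S a b) : IsBridgeCut G Sᶜ b a where
  adj := h.adj.symm
  mem := Finset.mem_compl.2 h.notMem
  notMem := by simpa using h.mem
  eq_and_eq x hx y hy hxy :=
    (h.eq_and_eq y (by simpa using hy) x (by simpa using hx) hxy.symm).symm

lemma IsBridgeCut.isOneSum [Fintype V] (h : IsBridgeCut G S a b) :
    IsOneSum G (insert b S) Sᶜ b where
  mem_or_mem x y hxy := by
    have hxy' := h.eq_and_eq x
    have hyx' := h.eq_and_eq y
    have := hxy.symm
    grind [Finset.mem_compl]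
  eq_of_mem x hx hx' := by grind [Finset.mem_compl]

lemma IsBridgeCut.transNum_le [Fintype V] (h : IsBridgeCut G S a b) :
    transNum G ≤ transNum (restrict G S) + transNum (restrict G Sᶜ) := by
  have leaf (x : V) (hx : (restrict G (insert b S)).Adj b x) : x = a := by
    rw [restrict_adj] at hx
    have hxS : x ∈ S := Finset.mem_of_mem_insert_of_ne hx.2.2 hx.1.ne'
    exact (h.eq_and_eq x hxS b h.notMem hx.1.symm).1
  have insert_le : transNum (restrict G (insert b S)) ≤ transNum (restrict G S) := by
    exact (transNum_le_restrict_compl_of_leaf leaf).trans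
      (transNum_restrict_restrict_le G (by grind [Finset.mem_compl]))
  have := h.isOneSum.transNum_le
  omega

end Bridge

section Degrees

variable {V : Type*} {G H : SimpleGraph V} {S T : Finset V} {u v x : V}

/-- The number of neighbours of `v` in `S`. -/
noncomputable def degIn (G : SimpleGraph V) (v : V) (S : Finset V) : ℕ := {x ∈ S | G.Adj v x}.card

lemma degIn_pos : 0 < degIn G v S ↔ ∃ x ∈ S, G.Adj v x := by
  simp only [degIn, Finset.card_pos, Finset.Nonempty, Finset.mem_filter]

lemma degIn_eq_zero : degIn G v S = 0 ↔ ∀ x ∈ S, ¬ G.Adj v x := by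
  simp only [degIn, Finset.card_eq_zero, Finset.filter_eq_empty_iff]

lemma degIn_mono (G : SimpleGraph V) (v : V) (h : S ⊆ T) : degIn G v S ≤ degIn G v T :=
  Finset.card_le_card (Finset.filter_subset_filter _ h)

lemma degIn_congr (h : ∀ x, (x ∈ S ∧ G.Adj v x) ↔ (x ∈ T ∧ H.Adj u x)) :
    degIn G v S = degIn H u T := by
  refine congrArg Finset.card (Finset.ext fun x => ?_)
  simpa only [Finset.mem_filter] using h x

lemma degIn_union (G : SimpleGraph V) (v : V) (h : Disjoint S T) :
    degIn G v (S ∪ T) = degIn G v S + degIn G v T := by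
  rw [degIn, Finset.filter_union, Finset.card_union_of_disjoint (Finset.disjoint_filter_filter h)]
  rfl

lemma degIn_singleton (G : SimpleGraph V) (v x : V) :
    degIn G v {x} = if G.Adj v x then 1 else 0 := by
  rw [degIn, Finset.filter_singleton]
  split_ifs <;> rfl

lemma degIn_insert (G : SimpleGraph V) (v : V) (hx : x ∉ S) :
    degIn G v (insert x S) = degIn G v S + if G.Adj v x then 1 else 0 := by
  rw [Finset.insert_eq, Finset.union_comm, degIn_union G v (Finset.disjoint_singleton_right.2 hx),
    degIn_singleton]

lemma degIn_insert_self (G : SimpleGraph V) (v : V) (S : Finset V) :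
    degIn G v (insert v S) = degIn G v S :=
  degIn_congr fun x => by grind [G.irrefl]

lemma degIn_le_card_of_forall_mem (h : ∀ x ∈ S, G.Adj v x → x ∈ T) : degIn G v S ≤ T.card :=
  Finset.card_le_card fun x hx => h x (Finset.mem_filter.1 hx).1 (Finset.mem_filter.1 hx).2

lemma exists_adj_and_forall_eq_of_degIn_eq_one (h : degIn G v S = 1) :
    ∃ s ∈ S, G.Adj v s ∧ ∀ x ∈ S, G.Adj v x → x = s := by
  obtain ⟨s, hs⟩ := Finset.card_eq_one.1 h
  have mem_iff (x : V) : x ∈ S ∧ G.Adj v x ↔ x = s := by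
    rw [← Finset.mem_filter, hs, Finset.mem_singleton]
  exact ⟨s, ((mem_iff s).2 rfl).1, ((mem_iff s).2 rfl).2, fun x hx hvx => (mem_iff x).1 ⟨hx, hvx⟩⟩

lemma degIn_eq_sdiff_add (G : SimpleGraph V) (v : V) (hx : x ∈ S) :
    degIn G v S = degIn G v (S \ {x}) + if G.Adj v x then 1 else 0 := by
  rw [← degIn_insert G v (by simp), ← Finset.erase_eq, Finset.insert_erase hx]

lemma sum_degIn_comm (G : SimpleGraph V) (S T : Finset V) :
    ∑ v ∈ S, degIn G v T = ∑ x ∈ T, degIn G x S := by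
  simp only [degIn, Finset.card_filter]
  rw [Finset.sum_comm]
  simp only [G.adj_comm]

variable [Fintype V]

/-- The degree of `v`. Unlike `SimpleGraph.degree`, it carries no finiteness instance depending on
the graph, so degrees in different graphs on the same vertices can be compared freely. -/
noncomputable def deg (G : SimpleGraph V) (v : V) : ℕ := degIn G v Finset.univ

lemma ncard_neighborSet (G : SimpleGraph V) (v : V) : (G.neighborSet v).ncard = deg G v := by
  rw [deg, degIn, ← Set.ncard_coe_finset]
  congr 1
  ext x
  simp

lemma deg_pos : 0 < deg G v ↔ ∃ x, G.Adj v x := by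
  simp only [deg, degIn_pos, Finset.mem_univ, true_and]

lemma deg_eq_zero : deg G v = 0 ↔ ∀ x, ¬ G.Adj v x := by
  simp only [deg, degIn_eq_zero, Finset.mem_univ, true_imp_iff]

lemma exists_forall_adj_iff_of_deg_eq_one (h : deg G v = 1) : ∃ u, ∀ x, G.Adj v x ↔ x = u := by
  obtain ⟨u, hu⟩ := Finset.card_eq_one.1 h
  exact ⟨u, fun x => by simpa using Finset.ext_iff.1 hu x⟩

lemma exists_forall_adj_iff_of_deg_eq_two (h : deg G v = 2) :
    ∃ p q, p ≠ q ∧ ∀ x, G.Adj v x ↔ x = p ∨ x = q := by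
  obtain ⟨p, q, hpq, hset⟩ := Finset.card_eq_two.1 h
  exact ⟨p, q, hpq, fun x => by simpa using Finset.ext_iff.1 hset x⟩

lemma degIn_le_deg (G : SimpleGraph V) (v : V) (S : Finset V) : degIn G v S ≤ deg G v :=
  degIn_mono G v (Finset.subset_univ S)

lemma degIn_add_degIn_compl (G : SimpleGraph V) (v : V) (S : Finset V) :
    degIn G v S + degIn G v Sᶜ = deg G v := by
  rw [← degIn_union G v disjoint_compl_right, Finset.union_compl, deg]

lemma deg_restrict (G : SimpleGraph V) (S : Finset V) (v : V) :
    deg (restrict G S) v = if v ∈ S then degIn G v S else 0 := by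
  split_ifs with hv
  · exact degIn_congr fun x => by simp only [restrict_adj, Finset.mem_univ, hv]; tauto
  · exact deg_eq_zero.2 fun x hx => hv hx.2.1

lemma deg_mono (h : G ≤ H) (v : V) : deg G v ≤ deg H v :=
  Finset.card_le_card (Finset.monotone_filter_right _ fun _ _ hx => h hx)

lemma deg_restrict_compl_singleton (hx : x ≠ v) :
    deg (restrict G {v}ᶜ) x + (if G.Adj x v then 1 else 0) = deg G x := by
  rw [deg_restrict, if_pos (by simpa using hx), ← degIn_add_degIn_compl G x {v}ᶜ, compl_compl,
    degIn_singleton]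

lemma deg_restrict_compl_singleton_self : deg (restrict G {v}ᶜ) v = 0 := by
  rw [deg_restrict, if_neg (by simp)]

lemma deg_restrict_le (G : SimpleGraph V) (S : Finset V) (v : V) :
    deg (restrict G S) v ≤ deg G v :=
  deg_mono (restrict_le S) v

lemma deg_deleteEdges_le (G : SimpleGraph V) (s : Set (Sym2 V)) (v : V) :
    deg (G.deleteEdges s) v ≤ deg G v :=
  deg_mono (G.deleteEdges_le s) v

lemma deg_deleteEdges_left {a b : V} (hab : G.Adj a b) :
    deg (G.deleteEdges {s(a, b)}) a + 1 = deg G a := by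
  have hsplit := degIn_eq_sdiff_add G a (Finset.mem_univ b)
  rw [if_pos hab] at hsplit
  rw [deg, deg, hsplit]
  congr 1
  refine degIn_congr fun x => ?_
  have := hab.ne
  simp only [deleteEdges_singleton_adj]
  grind

lemma deg_deleteEdges_right {a b : V} (hab : G.Adj a b) :
    deg (G.deleteEdges {s(a, b)}) b + 1 = deg G b := by
  rw [Sym2.eq_swap]
  exact deg_deleteEdges_left hab.symm

lemma deg_deleteEdges_of_ne {a b : V} (ha : x ≠ a) (hb : x ≠ b) :
    deg (G.deleteEdges {s(a, b)}) x = deg G x :=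
  degIn_congr fun y => by simp only [deleteEdges_singleton_adj, ha, hb]; tauto

lemma transNum_eq_zero_of_deg_eq_zero (h : ∀ v, deg G v = 0) : transNum G = 0 :=
  transNum_eq_zero_of_forall_not_adj fun a => deg_eq_zero.1 (h a)

/-- The sum of the degrees, i.e. twice the number of edges. -/
noncomputable def degSum (G : SimpleGraph V) : ℕ := ∑ v, deg G v

lemma degSum_lt (h : ∀ v, deg H v ≤ deg G v) (hu : deg H u < deg G u) : degSum H < degSum G :=
  Finset.sum_lt_sum (fun v _ => h v) ⟨u, Finset.mem_univ u, hu⟩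

lemma degSum_restrict_lt (hu : u ∉ S) (hpos : 0 < deg G u) : degSum (restrict G S) < degSum G :=
  degSum_lt (deg_restrict_le G S) (u := u) (by rwa [deg_restrict, if_neg hu])

end Degrees

section Potential

variable {V : Type*} [Fintype V] {G H : SimpleGraph V}

/-- Six times the potential function `phi`, as an integer. -/
def weight (d : ℕ) : ℤ := if d ≤ 2 then 0 else if d = 3 then 8 else 3 * d

@[simp] lemma weight_zero : weight 0 = 0 := rfl

@[simp] lemma weight_one : weight 1 = 0 := rfl

@[simp] lemma weight_two : weight 2 = 0 := rfl

@[simp] lemma weight_three : weight 3 = 8 := rfl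

@[simp] lemma weight_four : weight 4 = 12 := rfl

@[simp] lemma weight_five : weight 5 = 15 := rfl

lemma weight_nonneg (d : ℕ) : 0 ≤ weight d := by
  unfold weight
  split_ifs <;> omega

lemma phi_eq_weight_div (d : ℕ) : phi d = (weight d : ℝ) / 6 := by
  unfold phi weight
  split_ifs <;> push_cast <;> ring

/-- Six times the potential `phiSum` of the graph, as an integer. -/
noncomputable def potential (G : SimpleGraph V) : ℤ := ∑ v, weight (deg G v)

lemma phiSum_eq_potential_div (G : SimpleGraph V) : phiSum G = (potential G : ℝ) / 6 := by
  simp only [phiSum, potential, ncard_neighborSet, phi_eq_weight_div, Int.cast_sum,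
    Finset.sum_div]

lemma potential_restrict (G : SimpleGraph V) (A : Finset V) :
    potential (restrict G A) = ∑ v ∈ A, weight (degIn G v A) := by
  rw [potential, ← Finset.sum_subset (Finset.subset_univ A)]
  · exact Finset.sum_congr rfl fun v hv => by rw [deg_restrict, if_pos hv]
  · intro v _ hv
    rw [deg_restrict, if_neg hv]
    rfl

/-- The amount by which the loss of weight exceeds three units per edge when a vertex of degree `d`
loses `i` of its edges. -/
def excess (d i : ℕ) : ℤ := weight d - weight (d - i) - 3 * i

lemma excess_nonneg {d i : ℕ} (hd : d = 0 ∨ d = 3 ∨ d = 4 ∨ d = 5) (hi : i ≤ 2 ∨ d = 4 ∨ d = 5)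
    (hid : i ≤ d) : 0 ≤ excess d i := by
  rcases hd with rfl | rfl | rfl | rfl <;> interval_cases i <;> simp_all [excess, weight]

/-- The weight lost by the vertices of `B` when the graph is restricted to `A`. -/
noncomputable def loss (G : SimpleGraph V) (A B : Finset V) : ℤ :=
  ∑ v ∈ B, (weight (deg G v) - weight (degIn G v A))

lemma potential_eq_restrict_add_loss (G : SimpleGraph V) (A : Finset V) :
    potential G = potential (restrict G A) + loss G A A + ∑ v ∈ Aᶜ, weight (deg G v) := by
  rw [potential, ← Finset.sum_add_sum_compl A, potential_restrict, loss, Finset.sum_sub_distrib]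
  ring

lemma loss_eq (G : SimpleGraph V) (A B : Finset V) : loss G A B =
    3 * (∑ x ∈ Aᶜ, degIn G x B : ℕ) + ∑ v ∈ B, excess (deg G v) (degIn G v Aᶜ) := by
  rw [← sum_degIn_comm G B Aᶜ]
  push_cast
  rw [loss, Finset.mul_sum, ← Finset.sum_add_distrib]
  refine Finset.sum_congr rfl fun v _ => ?_
  have := degIn_add_degIn_compl G v A
  rw [excess, show deg G v - degIn G v Aᶜ = degIn G v A by omega]
  ring

lemma potential_restrict_add_le (G : SimpleGraph V) {A F : Finset V} (hF : F ⊆ A)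
    (h : ∀ v ∈ A, v ∉ F → 0 ≤ excess (deg G v) (degIn G v Aᶜ)) :
    potential (restrict G A) + ∑ x ∈ Aᶜ, (weight (deg G x) + 3 * (degIn G x A : ℤ))
      + ∑ v ∈ F, excess (deg G v) (degIn G v Aᶜ) ≤ potential G := by
  have := Finset.sum_le_sum_of_subset_of_nonneg hF h
  rw [potential_eq_restrict_add_loss G A, loss_eq, Finset.sum_add_distrib, ← Finset.mul_sum]
  push_cast
  linarith

lemma potential_eq_of_weight_eq {a b : V} (hab : a ≠ b)
    (h : ∀ x, x ≠ a → x ≠ b → weight (deg H x) = weight (deg G x)) :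
    potential G = potential H + (weight (deg G a) - weight (deg H a))
      + (weight (deg G b) - weight (deg H b)) := by
  have hsum : potential G - potential H =
      ∑ x ∈ {a, b}, (weight (deg G x) - weight (deg H x)) := by
    rw [potential, potential, ← Finset.sum_sub_distrib]
    refine (Finset.sum_subset (Finset.subset_univ _) fun x _ hx => ?_).symm
    simp only [Finset.mem_insert, Finset.mem_singleton, not_or] at hx
    rw [h x hx.1 hx.2, sub_self]
  rw [Finset.sum_pair hab] at hsum
  linarith

end Potential

section ConnectedAvoiding

variable {V : Type*} [Fintype V] {G : SimpleGraph V} {W A : Finset V} {x y : V}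

/-- `G - W` is connected, up to isolated vertices of `G`: on one side of every cut of `G - W`
without edges, all vertices are isolated in `G`. -/
def ConnectedAvoiding (G : SimpleGraph V) (W : Finset V) : Prop :=
  ∀ S : Finset V, Disjoint S W → (∀ a ∈ S, ∀ b, b ∉ S → b ∉ W → ¬ G.Adj a b) →
    (∀ a ∈ S, deg G a = 0) ∨ (∀ b, b ∉ S → b ∉ W → deg G b = 0)

lemma ConnectedAvoiding.restrict_compl (h : ConnectedAvoiding G (insert x W)) :
    ConnectedAvoiding (restrict G {x}ᶜ) W := by
  intro S hS hcut
  have deg_x : deg (restrict G {x}ᶜ) x = 0 := deg_restrict_compl_singleton_self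
  have deg_of_deg (v : V) (hv : v ≠ x → deg G v = 0) : deg (restrict G {x}ᶜ) v = 0 := by
    by_cases hvx : v = x
    · rw [hvx, deg_x]
    · have := deg_restrict_le G {x}ᶜ v
      have := hv hvx
      omega
  rw [Finset.disjoint_left] at hS
  refine (h (S \ {x}) (Finset.disjoint_left.2 (by grind)) fun a ha b hb hbW hab =>
    hcut a (by grind) b (by grind) (by grind)
      ⟨hab, by grind [Finset.mem_compl], by grind [Finset.mem_compl]⟩).imp ?_ ?_
  · exact fun hzero a ha => deg_of_deg a fun hax => hzero a (by grind)
  · exact fun hzero b hb hbW => deg_of_deg b fun hbx => hzero b (by grind) (by grind)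

lemma connectedAvoiding_empty_of_forall_notMem (y : V)
    (h : ∀ T : Finset V, y ∉ T → (∀ a ∈ T, ∀ b ∉ T, ¬ G.Adj a b) →
      (∀ a ∈ T, deg G a = 0) ∨ ∀ b ∉ T, deg G b = 0) : ConnectedAvoiding G ∅ := by
  intro S _ hS
  by_cases hy : y ∈ S
  · refine (h Sᶜ (by grind [Finset.mem_compl]) fun a ha b hb hab =>
      hS b (by grind [Finset.mem_compl]) a (by grind [Finset.mem_compl])
        (Finset.notMem_empty _) hab.symm).symm.imp ?_ ?_
    · exact fun hzero a ha => hzero a (by grind [Finset.mem_compl])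
    · exact fun hzero b hb _ => hzero b (by grind [Finset.mem_compl])
  · refine (h S hy fun a ha b hb => hS a ha b hb (Finset.notMem_empty _)).imp_right ?_
    exact fun hzero b hb _ => hzero b hb

lemma ConnectedAvoiding.restrict_of_unique_attachment (h : ConnectedAvoiding G W)
    (hA : Disjoint A W) (hout : ∀ a ∈ A, ∀ b, b ∉ A → b ∉ W → G.Adj a b → a = y) :
    ConnectedAvoiding (restrict G A) ∅ := by
  have deg_of_deg (v : V) (hv : v ∈ A → deg G v = 0) : deg (restrict G A) v = 0 := by
    by_cases hvA : v ∈ A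
    · have := deg_restrict_le G A v
      have := hv hvA
      omega
    · rw [deg_restrict, if_neg hvA]
  rw [Finset.disjoint_left] at hA
  refine connectedAvoiding_empty_of_forall_notMem y fun T hy hT =>
    (h (T ∩ A) (Finset.disjoint_left.2 (by grind)) ?_).imp ?_ ?_
  · intro a ha b hb hbW hab
    obtain ⟨haT, haA⟩ := Finset.mem_inter.1 ha
    by_cases hbA : b ∈ A
    · exact hT a haT b (by grind) ⟨hab, haA, hbA⟩
    · exact hy (hout a haA b hbA hbW hab ▸ haT)
  · exact fun hzero a ha => deg_of_deg a fun haA => hzero a (by grind)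
  · exact fun hzero b hb => deg_of_deg b fun hbA => hzero b (by grind) (by grind)

end ConnectedAvoiding

section Critical

variable {V : Type*} {G : SimpleGraph V}

/-- Deleting any edge of `G` lowers the transversal number. -/
def IsCritical (G : SimpleGraph V) : Prop :=
  ∀ e ∈ G.edgeSet, transNum (G.deleteEdges {e}) < transNum G

lemma exists_noncritical_edge (h : ¬ IsCritical G) :
    ∃ a b, G.Adj a b ∧ transNum G ≤ transNum (G.deleteEdges {s(a, b)}) := by
  unfold IsCritical at h
  push Not at h
  obtain ⟨⟨a, b⟩, hab, hle⟩ := h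
  exact ⟨a, b, hab, hle⟩

end Critical

section MinimalConfig

variable {V : Type*} [Fintype V] {G : SimpleGraph V}

/-- The lower bounds for the potential, in sixths, that are carried through the induction:
a general one and three better ones for graphs with restricted degrees. -/
structure PotentialBound (G : SimpleGraph V) : Prop where
  le_add_six : 32 * (transNum G : ℤ) ≤ potential G + 6
  le_add_four : ((∃ v, deg G v = 4) ∨ ∀ v, deg G v ≤ 4) → 32 * (transNum G : ℤ) ≤ potential G + 4
  le_add_three : (∃ v, deg G v = 1 ∨ deg G v = 3) → 32 * (transNum G : ℤ) ≤ potential G + 3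
  le : (∀ v, deg G v ≤ 4) → ((∃ v, deg G v = 1 ∨ deg G v = 3) ∨ ∀ v, deg G v ≤ 2) →
    32 * (transNum G : ℤ) ≤ potential G

lemma PotentialBound.of_le_add_three (h : 32 * (transNum G : ℤ) ≤ potential G + 3)
    (h₄ : (∀ v, deg G v ≤ 4) → 32 * (transNum G : ℤ) ≤ potential G) : PotentialBound G :=
  ⟨by omega, fun _ => by omega, fun _ => h, fun hdeg _ => h₄ hdeg⟩

lemma PotentialBound.of_le (h : 32 * (transNum G : ℤ) ≤ potential G) : PotentialBound G :=
  .of_le_add_three (by omega) fun _ => h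

/-- `G` is a connected graph (up to isolated vertices) of maximum degree at most five, and
`PotentialBound` holds for all such graphs with fewer edges. -/
structure MinimalConfig (G : SimpleGraph V) : Prop where
  bound_of_degSum_lt : ∀ H : SimpleGraph V, degSum H < degSum G → (∀ v, deg H v ≤ 5) →
    ConnectedAvoiding H ∅ → PotentialBound H
  deg_le : ∀ v, deg G v ≤ 5
  connected : ConnectedAvoiding G ∅

lemma MinimalConfig.bound_restrict (h : MinimalConfig G) {A : Finset V} {u : V} (hu : u ∉ A)
    (hpos : 0 < deg G u) (hA : ConnectedAvoiding (restrict G A) ∅) :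
    PotentialBound (restrict G A) :=
  h.bound_of_degSum_lt _ (degSum_restrict_lt hu hpos)
    (fun v => (deg_restrict_le G A v).trans (h.deg_le v)) hA

end MinimalConfig

section DegreeOne

variable {V : Type*} [Fintype V] {G : SimpleGraph V} {u v : V}

lemma potential_eq_restrict_add_of_leaf (hN : ∀ x, G.Adj v x ↔ x = u) :
    potential G = potential (restrict G {v}ᶜ) + (weight (deg G u) - weight (deg G u - 1)) := by
  have huv : u ≠ v := ((hN u).2 rfl).ne'
  have deg_v : deg G v = 1 := Finset.card_eq_one.2 ⟨u, by ext; simp [hN]⟩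
  have deg_u := deg_restrict_compl_singleton (G := G) huv
  rw [if_pos ((hN u).2 rfl).symm] at deg_u
  rw [potential_eq_of_weight_eq (H := restrict G {v}ᶜ) huv fun x hxu hxv => ?_,
    deg_restrict_compl_singleton_self, deg_v, ← deg_u, Nat.add_sub_cancel]
  · simp [weight]
  · have := deg_restrict_compl_singleton (G := G) hxv
    rw [if_neg fun hxv => hxu ((hN x).1 hxv.symm)] at this
    rw [← this, add_zero]

lemma ConnectedAvoiding.transNum_eq_zero_of_isolated_edge (h : ConnectedAvoiding G ∅)
    (hu : ∀ x, G.Adj u x ↔ x = v) (hv : ∀ x, G.Adj v x ↔ x = u) : transNum G = 0 := by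
  have deg_eq_zero_of_ne (x : V) (hxu : x ≠ u) (hxv : x ≠ v) : deg G x = 0 := by
    rcases h {u, v} (Finset.disjoint_empty_right _) (by grind) with hzero | hzero
    · exact absurd ((hu v).2 rfl) (deg_eq_zero.1 (hzero u (by simp)) v)
    · exact hzero x (by simp [hxu, hxv]) (Finset.notMem_empty _)
  have hle := transNum_le_restrict_compl_of_leaf fun x => (hv x).1
  have not_adj (a b : V) : ¬ (restrict G {v}ᶜ).Adj a b := fun ⟨hab, ha, hb⟩ => by
    have hau : a ≠ u := fun hau => by simp [(hu b).1 (hau ▸ hab)] at hb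
    exact deg_eq_zero.1 (deg_eq_zero_of_ne a hau (by simpa using ha)) b hab
  rw [transNum_eq_zero_of_forall_not_adj not_adj] at hle
  omega

lemma MinimalConfig.bound_of_deg_eq_one (h : MinimalConfig G) (hv : deg G v = 1) :
    PotentialBound G := by
  obtain ⟨u, hN⟩ := exists_forall_adj_iff_of_deg_eq_one hv
  have hvu : G.Adj v u := (hN u).2 rfl
  have hH : PotentialBound (restrict G {v}ᶜ) := by
    refine h.bound_restrict (u := v) (by simp) (by omega)
      (h.connected.restrict_of_unique_attachment (y := u) (by simp) fun a _ b hb _ hab => ?_)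
    obtain rfl : b = v := by simpa using hb
    exact (hN a).1 hab.symm
  have htrans := transNum_le_restrict_compl_of_leaf fun x => (hN x).1
  have hpot := potential_eq_restrict_add_of_leaf hN
  have deg_u := deg_restrict_compl_singleton (G := G) hvu.ne'
  rw [if_pos hvu.symm] at deg_u
  have deg_le := deg_restrict_le G {v}ᶜ
  have := h.deg_le u
  generalize restrict G {v}ᶜ = H at *
  obtain hu | hu | hu | hu | hu :
      deg G u = 1 ∨ deg G u = 2 ∨ deg G u = 3 ∨ deg G u = 4 ∨ deg G u = 5 := by omega
  all_goals simp only [hu, weight] at hpot; norm_num at hpot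
  · obtain ⟨v', hN'⟩ := exists_forall_adj_iff_of_deg_eq_one hu
    obtain rfl : v = v' := (hN' v).1 hvu.symm
    refine .of_le ?_
    rw [h.connected.transNum_eq_zero_of_isolated_edge hN' hN]
    exact Finset.sum_nonneg fun v _ => weight_nonneg _
  · have hu₁ : ∃ x, deg H x = 1 ∨ deg H x = 3 := ⟨u, .inl (by omega)⟩
    have := hH.le_add_three hu₁
    refine .of_le_add_three (by omega) fun hdeg => ?_
    have := hH.le (fun x => (deg_le x).trans (hdeg x)) (.inl hu₁)
    omega
  · have := hH.le_add_six
    exact .of_le (by omega)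
  · have := hH.le_add_three ⟨u, .inr (by omega)⟩
    exact .of_le (by omega)
  · have := hH.le_add_four (.inl ⟨u, by omega⟩)
    refine .of_le_add_three (by omega) fun hdeg => ?_
    have := hdeg u
    omega

end DegreeOne

section DegreeTwo

variable {V : Type*} [Fintype V] {G : SimpleGraph V} {v p q : V}

lemma suppress_comm (G : SimpleGraph V) (v p q : V) : suppress G v p q = suppress G v q p := by
  rw [suppress, edge_comm, suppress]

lemma deg_suppress_self (hN : ∀ x, G.Adj v x ↔ x = p ∨ x = q) :
    deg (suppress G v p q) v = 0 := by
  refine deg_eq_zero.2 fun x => ?_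
  have hp := ((hN p).2 (.inl rfl)).ne
  have hq := ((hN q).2 (.inr rfl)).ne
  rw [suppress_adj]
  grind

lemma deg_suppress_of_ne (hN : ∀ x, G.Adj v x ↔ x = p ∨ x = q) {x : V} (hxp : x ≠ p) (hxq : x ≠ q)
    (hxv : x ≠ v) : deg (suppress G v p q) x = deg G x := by
  refine degIn_congr fun y => ?_
  have := (hN x).1
  rw [suppress_adj]
  grind [G.adj_comm x y]

lemma deg_suppress_left (hN : ∀ x, G.Adj v x ↔ x = p ∨ x = q) (hpq : p ≠ q) :
    deg (suppress G v p q) p + (if G.Adj p q then 1 else 0) = deg G p := by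
  have hvp : G.Adj v p := (hN p).2 (.inl rfl)
  have hvq : G.Adj v q := (hN q).2 (.inr rfl)
  have deg_G : deg G p =
      degIn G p ((Finset.univ \ {v}) \ {q}) + (if G.Adj p q then 1 else 0) + 1 := by
    rw [deg, degIn_eq_sdiff_add G p (Finset.mem_univ v), if_pos hvp.symm,
      degIn_eq_sdiff_add G p (x := q) (by simpa using hvq.ne')]
  have deg_suppress : deg (suppress G v p q) p = degIn G p ((Finset.univ \ {v}) \ {q}) + 1 := by
    rw [deg, degIn_eq_sdiff_add _ p (Finset.mem_univ q),
      if_pos (suppress_adj.2 (.inr ⟨.inl ⟨rfl, rfl⟩, hpq⟩))]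
    refine congrArg (· + 1) (degIn_congr fun x => ?_)
    have := hvp.ne
    rw [suppress_adj]
    grind
  omega

lemma deg_suppress_right (hN : ∀ x, G.Adj v x ↔ x = p ∨ x = q) (hpq : p ≠ q) :
    deg (suppress G v p q) q + (if G.Adj p q then 1 else 0) = deg G q := by
  rw [suppress_comm, G.adj_comm]
  exact deg_suppress_left (fun x => (hN x).trans or_comm) hpq.symm

lemma deg_suppress_le (hN : ∀ x, G.Adj v x ↔ x = p ∨ x = q) (hpq : p ≠ q) (x : V) :
    deg (suppress G v p q) x ≤ deg G x := by
  by_cases hxv : x = v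
  · rw [hxv, deg_suppress_self hN]
    exact Nat.zero_le _
  by_cases hxp : x = p
  · subst hxp
    exact Nat.le.intro (deg_suppress_left hN hpq)
  by_cases hxq : x = q
  · subst hxq
    exact Nat.le.intro (deg_suppress_right hN hpq)
  exact (deg_suppress_of_ne hN hxp hxq hxv).le

lemma ConnectedAvoiding.suppress (h : ConnectedAvoiding G ∅)
    (hN : ∀ x, G.Adj v x ↔ x = p ∨ x = q) (hpq : p ≠ q) :
    ConnectedAvoiding (suppress G v p q) ∅ := by
  have deg_of_deg (x : V) (hx : x ≠ v → deg G x = 0) :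
      deg (K4Transversal.suppress G v p q) x = 0 := by
    by_cases hxv : x = v
    · rw [hxv, deg_suppress_self hN]
    · have := deg_suppress_le hN hpq x
      have := hx hxv
      omega
  refine connectedAvoiding_empty_of_forall_notMem p fun T hp hT => ?_
  have hq : q ∉ T := fun hq =>
    hT q hq p hp (suppress_adj.2 (.inr ⟨.inr ⟨rfl, rfl⟩, hpq.symm⟩))
  rcases h (T \ {v}) (Finset.disjoint_empty_right _) (fun a ha b hb _ hab => by
    have := hT a (by grind) b
    have := hN a
    have := hab.symm
    grind [suppress_adj]) with hzero | hzero
  · exact .inl fun a ha => deg_of_deg a fun hav => hzero a (by grind)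
  · have := deg_eq_zero.1 (hzero v (by simp) (Finset.notMem_empty _)) p
    exact absurd ((hN p).2 (.inl rfl)) this

lemma MinimalConfig.bound_suppress (h : MinimalConfig G) (hN : ∀ x, G.Adj v x ↔ x = p ∨ x = q)
    (hpq : p ≠ q) : PotentialBound (suppress G v p q) := by
  have hle := deg_suppress_le hN hpq
  refine h.bound_of_degSum_lt _ (degSum_lt hle (u := v) ?_) (fun x => (hle x).trans (h.deg_le x))
    (h.connected.suppress hN hpq)
  rw [deg_suppress_self hN]
  exact deg_pos.2 ⟨p, (hN p).2 (.inl rfl)⟩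

lemma MinimalConfig.bound_of_deg_eq_two_of_not_adj (h : MinimalConfig G)
    (hN : ∀ x, G.Adj v x ↔ x = p ∨ x = q) (hpq : p ≠ q) (hv : deg G v = 2)
    (hadj : ¬ G.Adj p q) : PotentialBound G := by
  have hH := h.bound_suppress hN hpq
  have htrans := transNum_le_suppress fun x => (hN x).1
  have hle := deg_suppress_le hN hpq
  have deg_v := deg_suppress_self hN
  have deg_eq (x : V) (hxv : x ≠ v) : deg (suppress G v p q) x = deg G x := by
    have hp := deg_suppress_left hN hpq
    have hq := deg_suppress_right hN hpq
    rw [if_neg hadj, add_zero] at hp hq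
    by_cases hxp : x = p
    · rwa [hxp]
    by_cases hxq : x = q
    · rwa [hxq]
    exact deg_suppress_of_ne hN hxp hxq hxv
  have hpot : potential G = potential (suppress G v p q) := by
    refine Finset.sum_congr rfl fun x _ => ?_
    by_cases hxv : x = v
    · rw [hxv, hv, deg_v]
      rfl
    · rw [deg_eq x hxv]
  generalize suppress G v p q = H at *
  have exists_deg (k : ℕ) (hk : k ≠ 2) (x : V) (hx : deg G x = k) : deg H x = k := by
    rw [deg_eq x fun hxv => hk (by rw [← hx, hxv, hv]), hx]
  have exists_odd : (∃ x, deg G x = 1 ∨ deg G x = 3) → ∃ x, deg H x = 1 ∨ deg H x = 3 :=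
    fun ⟨x, hx⟩ => ⟨x, hx.imp (exists_deg 1 (by omega) x) (exists_deg 3 (by omega) x)⟩
  refine ⟨?_, fun h₄ => ?_, fun h₃ => ?_, fun hdeg h₀ => ?_⟩
  · have := hH.le_add_six
    omega
  · have := hH.le_add_four (h₄.imp (fun ⟨x, hx⟩ => ⟨x, exists_deg 4 (by omega) x hx⟩)
      fun hdeg x => (hle x).trans (hdeg x))
    omega
  · have := hH.le_add_three (exists_odd h₃)
    omega
  · have := hH.le (fun x => (hle x).trans (hdeg x))
      (h₀.imp exists_odd fun hdeg x => (hle x).trans (hdeg x))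
    omega

lemma MinimalConfig.bound_of_deg_eq_two_of_adj (h : MinimalConfig G)
    (hN : ∀ x, G.Adj v x ↔ x = p ∨ x = q) (hv : deg G v = 2) (hadj : G.Adj p q) :
    PotentialBound G := by
  have hH := h.bound_suppress hN hadj.ne
  have htrans := transNum_le_suppress fun x => (hN x).1
  have hle := deg_suppress_le hN hadj.ne
  have deg_p := deg_suppress_left hN hadj.ne
  have deg_q := deg_suppress_right hN hadj.ne
  rw [if_pos hadj] at deg_p deg_q
  have pos_p : 0 < deg (suppress G v p q) p :=
    deg_pos.2 ⟨q, suppress_adj.2 (.inr ⟨.inl ⟨rfl, rfl⟩, hadj.ne⟩)⟩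
  have pos_q : 0 < deg (suppress G v p q) q :=
    deg_pos.2 ⟨p, suppress_adj.2 (.inr ⟨.inr ⟨rfl, rfl⟩, hadj.ne'⟩)⟩
  have hpot := potential_eq_of_weight_eq (G := G) (H := suppress G v p q) hadj.ne
    fun x hxp hxq => by
      by_cases hxv : x = v
      · rw [hxv, hv, deg_suppress_self hN]
        rfl
      · rw [deg_suppress_of_ne hN hxp hxq hxv]
  have := h.deg_le p
  have := h.deg_le q
  generalize suppress G v p q = H at *
  rw [← deg_p, ← deg_q] at hpot
  have le_add_three_p (hp : deg H p = 1 ∨ deg H p = 3) := hH.le_add_three ⟨p, hp⟩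
  have le_add_three_q (hq : deg H q = 1 ∨ deg H q = 3) := hH.le_add_three ⟨q, hq⟩
  have le_add_six := hH.le_add_six
  have hp : deg H p = 1 ∨ deg H p = 2 ∨ deg H p = 3 ∨ deg H p = 4 := by omega
  have hq : deg H q = 1 ∨ deg H q = 2 ∨ deg H q = 3 ∨ deg H q = 4 := by omega
  refine .of_le_add_three ?_ fun hdeg => ?_
  · rcases hp with hp | hp | hp | hp <;> rcases hq with hq | hq | hq | hq <;>
      simp [hp, hq, weight] at hpot le_add_three_p le_add_three_q <;> omega
  · have le_p (hp : deg H p = 1 ∨ deg H p = 3) :=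
      hH.le (fun x => (hle x).trans (hdeg x)) (.inl ⟨p, hp⟩)
    have := hdeg p
    have := hdeg q
    rcases hp with hp | hp | hp | hp <;> rcases hq with hq | hq | hq | hq <;>
      simp [hp, hq, weight] at hpot le_add_three_p le_add_three_q le_p <;> omega

lemma MinimalConfig.bound_of_deg_eq_two (h : MinimalConfig G) (hv : deg G v = 2) :
    PotentialBound G := by
  obtain ⟨p, q, hpq, hN⟩ := exists_forall_adj_iff_of_deg_eq_two hv
  by_cases hadj : G.Adj p q
  · exact h.bound_of_deg_eq_two_of_adj hN hv hadj
  · exact h.bound_of_deg_eq_two_of_not_adj hN hpq hv hadj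

end DegreeTwo

section Separation

variable {V : Type*} [Fintype V] {G : SimpleGraph V} {W S T : Finset V} {a b x : V}

/-- `W` separates `S` from `T`: the three sets partition the vertices, no edge joins `S` to `T`,
and neither `S` nor `T` consists of isolated vertices only. -/
structure IsSeparation (G : SimpleGraph V) (W S T : Finset V) : Prop where
  disjoint : Disjoint S W
  mem_iff : ∀ x, x ∈ T ↔ x ∉ S ∧ x ∉ W
  not_adj : ∀ a ∈ S, ∀ b ∈ T, ¬ G.Adj a b
  exists_left : ∃ a ∈ S, 0 < deg G a
  exists_right : ∃ b ∈ T, 0 < deg G b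

lemma IsSeparation.symm (h : IsSeparation G W S T) : IsSeparation G W T S where
  disjoint := Finset.disjoint_left.2 fun x hx => ((h.mem_iff x).1 hx).2
  mem_iff x := by
    have := h.mem_iff x
    have : x ∈ S → x ∉ W := fun hx => Finset.disjoint_left.1 h.disjoint hx
    tauto
  not_adj a ha b hb hab := h.not_adj b hb a ha hab.symm
  exists_left := h.exists_right
  exists_right := h.exists_left

lemma ConnectedAvoiding.not_isSeparation (h : ConnectedAvoiding G W) :
    ¬ IsSeparation G W S T := fun hsep => by
  obtain ⟨a, ha, deg_a⟩ := hsep.exists_left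
  obtain ⟨b, hb, deg_b⟩ := hsep.exists_right
  obtain ⟨hbS, hbW⟩ := (hsep.mem_iff b).1 hb
  rcases h S hsep.disjoint fun x hx y hyS hyW =>
      hsep.not_adj x hx y ((hsep.mem_iff y).2 ⟨hyS, hyW⟩) with hzero | hzero
  · exact deg_a.ne' (hzero a ha)
  · exact deg_b.ne' (hzero b hbS hbW)

lemma exists_isSeparation_of_not_connectedAvoiding (h : ¬ ConnectedAvoiding G W) :
    ∃ S T, IsSeparation G W S T := by
  unfold ConnectedAvoiding at h
  push Not at h
  obtain ⟨S, hSW, hS, ⟨a, ha, deg_a⟩, b, hbS, hbW, deg_b⟩ := h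
  exact ⟨S, (S ∪ W)ᶜ, hSW, by simp,
    fun x hx y hy => hS x hx y (by grind [Finset.mem_compl]) (by grind [Finset.mem_compl]),
    ⟨a, ha, Nat.pos_of_ne_zero deg_a⟩, b, by grind [Finset.mem_compl], Nat.pos_of_ne_zero deg_b⟩

lemma ConnectedAvoiding.exists_isBridgeCut (h : ConnectedAvoiding G ∅)
    (hdel : ¬ ConnectedAvoiding (G.deleteEdges {s(a, b)}) ∅) : ∃ S x y, IsBridgeCut G S x y := by
  obtain ⟨S, T, hsep⟩ := exists_isSeparation_of_not_connectedAvoiding hdel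
  obtain ⟨x, hx, y, hy, hxy⟩ : ∃ x ∈ S, ∃ y ∈ T, G.Adj x y := by
    by_contra! hcon
    have pos_of_pos (z : V) (hz : 0 < deg (G.deleteEdges {s(a, b)}) z) : 0 < deg G z :=
      hz.trans_le (deg_deleteEdges_le G _ z)
    exact h.not_isSeparation ⟨hsep.disjoint, hsep.mem_iff, hcon,
      hsep.exists_left.imp fun z hz => ⟨hz.1, pos_of_pos z hz.2⟩,
      hsep.exists_right.imp fun z hz => ⟨hz.1, pos_of_pos z hz.2⟩⟩
  have eq_or_eq (x' : V) (hx' : x' ∈ S) (y' : V) (hy' : y' ∉ S) (hxy' : G.Adj x' y') :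
      (x' = a ∧ y' = b) ∨ (x' = b ∧ y' = a) := by
    have := hsep.not_adj x' hx' y' ((hsep.mem_iff y').2 ⟨hy', Finset.notMem_empty _⟩)
    rw [deleteEdges_singleton_adj] at this
    tauto
  have hyS := ((hsep.mem_iff y).1 hy).1
  have := eq_or_eq x hx y hyS hxy
  exact ⟨S, x, y, hxy, hx, hyS, fun x' hx' y' hy' hxy' => by grind⟩

lemma IsCritical.transNum_restrict_add_lt (h : IsCritical G) (hST : Disjoint S T)
    (hab : G.Adj a b) (ha : a ∈ S) (hb : b ∈ T) :
    transNum (restrict G S) + transNum (restrict G T) < transNum G := by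
  rw [Finset.disjoint_left] at hST
  have restrict_le_deleteEdges (Q : Finset V) (hQ : a ∉ Q ∨ b ∉ Q) :
      restrict G Q ≤ restrict (G.deleteEdges {s(a, b)}) Q := by
    rintro x y ⟨hxy, hx, hy⟩
    refine ⟨?_, hx, hy⟩
    rw [deleteEdges_singleton_adj]
    grind
  calc transNum (restrict G S) + transNum (restrict G T)
      ≤ transNum (restrict (G.deleteEdges {s(a, b)}) S)
        + transNum (restrict (G.deleteEdges {s(a, b)}) T) :=
        add_le_add (transNum_mono (restrict_le_deleteEdges S (.inr fun hbS => hST hbS hb)))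
          (transNum_mono (restrict_le_deleteEdges T (.inl (hST ha))))
    _ ≤ transNum (G.deleteEdges {s(a, b)}) :=
        transNum_restrict_add_transNum_restrict_le _ (Finset.disjoint_left.2 hST)
    _ < transNum G := h s(a, b) hab

lemma IsBridgeCut.not_isCritical (h : IsBridgeCut G S a b) : ¬ IsCritical G := fun hcrit =>
  (hcrit.transNum_restrict_add_lt disjoint_compl_right h.adj h.mem
    (Finset.mem_compl.2 h.notMem)).not_ge h.transNum_le

lemma potential_restrict_of_unique_attachment (hx : x ∈ S)
    (h : ∀ v ∈ S, v ≠ x → ∀ y, G.Adj v y → y ∈ S) :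
    potential (restrict G S) =
      ∑ v ∈ S, weight (deg G v) - weight (deg G x) + weight (degIn G x S) := by
  have degIn_eq : ∑ v ∈ S.erase x, weight (degIn G v S) = ∑ v ∈ S.erase x, weight (deg G v) := by
    refine Finset.sum_congr rfl fun v hv => congrArg weight (degIn_congr fun y => ?_)
    have := h v (Finset.mem_of_mem_erase hv) (Finset.ne_of_mem_erase hv) y
    simp only [Finset.mem_univ]
    tauto
  rw [potential_restrict, ← Finset.add_sum_erase S _ hx, degIn_eq,
    ← Finset.add_sum_erase S (fun v => weight (deg G v)) hx]
  ring

end Separation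

section NoncriticalEdge

variable {V : Type*} [Fintype V] {G : SimpleGraph V} {S : Finset V} {a b : V}

lemma MinimalConfig.le_potential_of_noncritical_edge (h : MinimalConfig G)
    (hdeg : ∀ v, deg G v = 0 ∨ 3 ≤ deg G v) (hab : G.Adj a b)
    (hle : transNum G ≤ transNum (G.deleteEdges {s(a, b)}))
    (hconn : ConnectedAvoiding (G.deleteEdges {s(a, b)}) ∅) :
    32 * (transNum G : ℤ) ≤ potential G := by
  have deg_a := deg_deleteEdges_left hab
  have deg_b := deg_deleteEdges_right hab
  have hpot := potential_eq_of_weight_eq (G := G) (H := G.deleteEdges {s(a, b)}) hab.ne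
    fun x hxa hxb => by rw [deg_deleteEdges_of_ne hxa hxb]
  have deg_le := deg_deleteEdges_le G {s(a, b)}
  have := (h.bound_of_degSum_lt _ (degSum_lt deg_le (u := a) (by omega))
    (fun x => (deg_le x).trans (h.deg_le x)) hconn).le_add_six
  generalize G.deleteEdges {s(a, b)} = H at *
  have three_le (d e : ℕ) (hde : d + 1 = e) (he : e = 0 ∨ 3 ≤ e) (he₅ : e ≤ 5) :
      3 ≤ weight e - weight d := by
    obtain rfl | rfl | rfl : e = 3 ∨ e = 4 ∨ e = 5 := by omega
    all_goals obtain rfl := Nat.succ_injective hde; simp [weight]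
  have := three_le _ _ deg_a (hdeg a) (h.deg_le a)
  have := three_le _ _ deg_b (hdeg b) (h.deg_le b)
  omega

lemma IsBridgeCut.degIn_add_one (h : IsBridgeCut G S a b) : degIn G a S + 1 = deg G a := by
  have degIn_compl : degIn G a Sᶜ = degIn G a {b} := degIn_congr fun x => by
    have := h.eq_and_eq a h.mem x
    have := h.adj
    have := h.notMem
    grind [Finset.mem_compl]
  rw [← degIn_add_degIn_compl G a S, degIn_compl, degIn_singleton, if_pos h.adj]

lemma MinimalConfig.bound_bridge_side (h : MinimalConfig G)
    (hdeg : ∀ v, deg G v = 0 ∨ 3 ≤ deg G v) (hcut : IsBridgeCut G S a b) :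
    32 * (transNum (restrict G S) : ℤ) ≤ ∑ v ∈ S, weight (deg G v) + 1 ∧
      (deg G a ≤ 4 → 32 * (transNum (restrict G S) : ℤ) ≤ ∑ v ∈ S, weight (deg G v)) := by
  have hS := h.bound_restrict hcut.notMem (deg_pos.2 ⟨a, hcut.adj.symm⟩)
    (h.connected.restrict_of_unique_attachment (y := a) (Finset.disjoint_empty_right _)
      fun x hx y hy _ hxy => (hcut.eq_and_eq x hx y hy hxy).1)
  have hpot := potential_restrict_of_unique_attachment (G := G) hcut.mem fun v hv hva y hvy => by
    by_contra hy
    exact hva (hcut.eq_and_eq v hv y hy hvy).1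
  have deg_a := deg_restrict G S a
  rw [if_pos hcut.mem] at deg_a
  have := hcut.degIn_add_one
  have := hdeg a
  have := h.deg_le a
  obtain ha | ha | ha : degIn G a S = 2 ∨ degIn G a S = 3 ∨ degIn G a S = 4 := by omega
  · have := hS.le_add_six
    rw [ha, show deg G a = 3 by omega] at hpot
    norm_num at hpot
    omega
  · have := hS.le_add_three ⟨a, .inr (deg_a.trans ha)⟩
    rw [ha, show deg G a = 4 by omega] at hpot
    norm_num at hpot
    omega
  · have := hS.le_add_four (.inl ⟨a, deg_a.trans ha⟩)
    rw [ha, show deg G a = 5 by omega] at hpot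
    norm_num at hpot
    omega

lemma MinimalConfig.bound_of_isBridgeCut (h : MinimalConfig G)
    (hdeg : ∀ v, deg G v = 0 ∨ 3 ≤ deg G v) (hcut : IsBridgeCut G S a b) : PotentialBound G := by
  obtain ⟨left_le_add_one, left_le⟩ := h.bound_bridge_side hdeg hcut
  obtain ⟨right_le_add_one, right_le⟩ := h.bound_bridge_side hdeg hcut.compl
  have htrans := hcut.transNum_le
  have hpot : _ = potential G := Finset.sum_add_sum_compl S _
  refine .of_le_add_three (by omega) fun hdeg₄ => ?_
  have := left_le (hdeg₄ a)
  have := right_le (hdeg₄ b)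
  omega

lemma MinimalConfig.bound_of_not_isCritical (h : MinimalConfig G)
    (hdeg : ∀ v, deg G v = 0 ∨ 3 ≤ deg G v) (hcrit : ¬ IsCritical G) : PotentialBound G := by
  obtain ⟨a, b, hab, hle⟩ := exists_noncritical_edge hcrit
  by_cases hconn : ConnectedAvoiding (G.deleteEdges {s(a, b)}) ∅
  · exact .of_le (h.le_potential_of_noncritical_edge hdeg hab hle hconn)
  · obtain ⟨S, x, y, hcut⟩ := h.connected.exists_isBridgeCut hconn
    exact h.bound_of_isBridgeCut hdeg hcut

lemma not_isBridgeCut_of_connectedAvoiding_singleton (hconn : ∀ x, ConnectedAvoiding G {x})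
    (hdeg : ∀ v, deg G v ≠ 1) : ¬ IsBridgeCut G S a b := fun hcut => by
  have := hcut.degIn_add_one
  have := hdeg a
  obtain ⟨c, hcS, hac⟩ := degIn_pos.1 (show 0 < degIn G a S by omega)
  have hmem := hcut.mem
  have hnotMem := hcut.notMem
  refine (hconn a).not_isSeparation (S := S \ {a}) (T := Sᶜ)
    ⟨by simp, by grind [Finset.mem_compl], fun x hx y hy hxy => ?_,
      ⟨c, by grind [hac.ne], deg_pos.2 ⟨a, hac.symm⟩⟩,
      b, by grind [Finset.mem_compl], deg_pos.2 ⟨a, hcut.adj.symm⟩⟩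
  have := hcut.eq_and_eq x (by grind) y (by grind [Finset.mem_compl]) hxy
  grind

lemma MinimalConfig.le_potential_of_not_isCritical (h : MinimalConfig G)
    (hconn : ∀ x, ConnectedAvoiding G {x}) (hdeg : ∀ v, deg G v = 0 ∨ 3 ≤ deg G v)
    (hcrit : ¬ IsCritical G) : 32 * (transNum G : ℤ) ≤ potential G := by
  obtain ⟨a, b, hab, hle⟩ := exists_noncritical_edge hcrit
  refine h.le_potential_of_noncritical_edge hdeg hab hle ?_
  by_contra hdel
  obtain ⟨S, x, y, hcut⟩ := h.connected.exists_isBridgeCut hdel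
  exact not_isBridgeCut_of_connectedAvoiding_singleton hconn
    (fun v => by have := hdeg v; omega) hcut

end NoncriticalEdge

section CutVertex

variable {V : Type*} [Fintype V] {G : SimpleGraph V} {S T : Finset V} {x : V}

lemma IsSeparation.degIn_add_degIn (h : IsSeparation G {x} S T) :
    degIn G x S + degIn G x T = deg G x := by
  rw [← degIn_add_degIn_compl G x S]
  refine congrArg _ (degIn_congr fun y => ?_)
  have := h.mem_iff y
  have := G.loopless.irrefl x
  grind [Finset.mem_compl]

lemma IsSeparation.two_le_degIn (h : IsSeparation G {x} S T) (hconn : ConnectedAvoiding G ∅)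
    (hcrit : IsCritical G) : 2 ≤ degIn G x S := by
  have hxS : x ∉ S := Finset.disjoint_singleton_right.1 h.disjoint
  have eq_of_adj (a : V) (ha : a ∈ S) (b : V) (hb : b ∉ S) (hab : G.Adj a b) : b = x := by
    by_contra hbx
    exact h.not_adj a ha b ((h.mem_iff b).2 ⟨hb, by simpa using hbx⟩) hab
  by_contra! hlt
  obtain h₀ | h₁ : degIn G x S = 0 ∨ degIn G x S = 1 := by omega
  · rw [degIn_eq_zero] at h₀
    obtain ⟨b, hb, deg_b⟩ := h.exists_right
    refine hconn.not_isSeparation ⟨Finset.disjoint_empty_right S, fun y => by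
      rw [Finset.mem_compl, eq_true (Finset.notMem_empty y), and_true], fun a ha y hy hay => ?_,
      h.exists_left, b, Finset.mem_compl.2 ((h.mem_iff b).1 hb).1, deg_b⟩
    exact h₀ a ha (eq_of_adj a ha y (Finset.mem_compl.1 hy) hay ▸ hay).symm
  · obtain ⟨y, hyS, hxy, eq_y⟩ := exists_adj_and_forall_eq_of_degIn_eq_one h₁
    have hcut : IsBridgeCut G S y x := ⟨hxy.symm, hyS, hxS, fun a ha b hb hab => by
      obtain rfl := eq_of_adj a ha b hb hab
      exact ⟨eq_y a ha hab.symm, rfl⟩⟩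
    exact hcut.not_isCritical hcrit

lemma IsSeparation.isOneSum (h : IsSeparation G {x} S T) :
    IsOneSum G (insert x S) (insert x T) x where
  mem_or_mem a b hab := by
    have := h.not_adj a
    have := h.not_adj b
    have := h.mem_iff a
    have := h.mem_iff b
    have := hab.symm
    grind
  eq_of_mem y := by
    have := h.mem_iff y
    grind

lemma IsSeparation.bound_insert (h : IsSeparation G {x} S T) (hG : MinimalConfig G) :
    PotentialBound (restrict G (insert x S)) := by
  obtain ⟨b, hb, deg_b⟩ := h.exists_right
  have := h.mem_iff b
  refine hG.bound_restrict (u := b) (by grind) deg_b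
    (hG.connected.restrict_of_unique_attachment (y := x) (by simp) fun a ha y hy _ hay => ?_)
  have := h.not_adj a
  have := h.mem_iff y
  grind

lemma IsSeparation.potential_restrict_insert (h : IsSeparation G {x} S T) :
    potential (restrict G (insert x S)) =
      ∑ v ∈ S, weight (deg G v) + weight (degIn G x S) := by
  have hxS : x ∉ S := Finset.disjoint_singleton_right.1 h.disjoint
  rw [potential_restrict_of_unique_attachment (x := x) (Finset.mem_insert_self x S),
    Finset.sum_insert hxS, degIn_insert G x hxS, if_neg G.irrefl]
  · ring_nf
  · intro v hv hvx y hvy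
    have := h.not_adj v (Finset.mem_of_mem_insert_of_ne hv hvx) y
    have := h.mem_iff y
    grind

lemma IsSeparation.potential_eq (h : IsSeparation G {x} S T) : potential G =
    weight (deg G x) + ∑ v ∈ S, weight (deg G v) + ∑ v ∈ T, weight (deg G v) := by
  have hxS : x ∉ S := Finset.disjoint_singleton_right.1 h.disjoint
  rw [potential, ← Finset.sum_add_sum_compl (insert x S), Finset.sum_insert hxS,
    show (insert x S)ᶜ = T by ext y; have := h.mem_iff y; grind [Finset.mem_compl]]

lemma IsSeparation.bound_of_degIn_le (h : IsSeparation G {x} S T) (hG : MinimalConfig G)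
    (hcrit : IsCritical G) (hle : degIn G x S ≤ degIn G x T) : PotentialBound G := by
  have htrans := h.isOneSum.transNum_le
  have left_pot := h.potential_restrict_insert
  have right_pot := h.symm.potential_restrict_insert
  have hpot := h.potential_eq
  have hdeg := h.degIn_add_degIn
  have := h.two_le_degIn hG.connected hcrit
  have := hG.deg_le x
  have left_le := (h.bound_insert hG).le_add_six
  have hT := h.symm.bound_insert hG
  obtain ⟨hS₂, hT₂ | hT₃⟩ : degIn G x S = 2 ∧ (degIn G x T = 2 ∨ degIn G x T = 3) := by omega
  · have := hT.le_add_six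
    rw [hS₂] at left_pot
    rw [hT₂] at right_pot
    rw [← hdeg, hS₂, hT₂] at hpot
    norm_num at left_pot right_pot hpot
    exact .of_le (by omega)
  · have deg_x : deg (restrict G (insert x T)) x = 3 := by
      rw [deg_restrict, if_pos (Finset.mem_insert_self x T), degIn_insert_self, hT₃]
    have := hT.le_add_three ⟨x, .inr deg_x⟩
    rw [hS₂] at left_pot
    rw [hT₃] at right_pot
    rw [← hdeg, hS₂, hT₃] at hpot
    norm_num at left_pot right_pot hpot
    refine .of_le_add_three (by omega) fun hdeg₄ => ?_
    have := hdeg₄ x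
    omega

lemma MinimalConfig.bound_of_cutVertex (h : MinimalConfig G) (hcrit : IsCritical G)
    (hx : ¬ ConnectedAvoiding G {x}) : PotentialBound G := by
  obtain ⟨S, T, hsep⟩ := exists_isSeparation_of_not_connectedAvoiding hx
  rcases le_total (degIn G x S) (degIn G x T) with hle | hle
  · exact hsep.bound_of_degIn_le h hcrit hle
  · exact hsep.symm.bound_of_degIn_le h hcrit hle

end CutVertex

section ReducedConfig

variable {V : Type*} [Fintype V] {G : SimpleGraph V} {A B S : Finset V} {v x : V} {n : ℕ}

/-- A minimal configuration `G` that is reduced, up to isolated vertices. -/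
structure ReducedConfig (G : SimpleGraph V) : Prop extends MinimalConfig G where
  connected_singleton : ∀ x, ConnectedAvoiding G {x}
  deg_eq_zero_or : ∀ v, deg G v = 0 ∨ 3 ≤ deg G v
  critical : IsCritical G

lemma ReducedConfig.deg_mem (h : ReducedConfig G) (v : V) :
    deg G v = 0 ∨ deg G v = 3 ∨ deg G v = 4 ∨ deg G v = 5 := by
  have := h.deg_eq_zero_or v
  have := h.deg_le v
  omega

lemma sum_weight_eq (G : SimpleGraph V) (hBA : B ⊆ A) :
    ∑ x ∈ B, weight (deg G x) + ∑ x ∈ A \ B, weight (degIn G x A) =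
      potential (restrict G A) + loss G A B := by
  rw [potential_restrict, ← Finset.sum_sdiff hBA, loss, Finset.sum_sub_distrib]
  ring

lemma ReducedConfig.potential_restrict_add_excess_le (h : ReducedConfig G) (hBA : B ⊆ A)
    (hB : ∀ x ∈ B, degIn G x Aᶜ ≤ 2) (hv : v ∈ B) (hn : n ≤ ∑ x ∈ Aᶜ, degIn G x B) :
    potential (restrict G A) + 3 * n + excess (deg G v) (degIn G v Aᶜ) ≤
      ∑ x ∈ B, weight (deg G x) + ∑ x ∈ A \ B, weight (degIn G x A) := by
  have excess_le : excess (deg G v) (degIn G v Aᶜ) ≤ ∑ x ∈ B, excess (deg G x) (degIn G x Aᶜ) :=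
    Finset.single_le_sum (f := fun x => excess (deg G x) (degIn G x Aᶜ))
      (fun x hx => excess_nonneg (h.deg_mem x) (.inl (hB x hx)) (degIn_le_deg G x _)) hv
  have : (n : ℤ) ≤ (∑ x ∈ Aᶜ, degIn G x B : ℕ) := by exact_mod_cast hn
  rw [sum_weight_eq G hBA, loss_eq]
  linarith

lemma ReducedConfig.transNum_restrict_le (h : ReducedConfig G) (hA : PotentialBound (restrict G A))
    (hBA : B ⊆ A) (hB : ∀ x ∈ B, degIn G x Aᶜ ≤ 2) (hv : v ∈ B) (hpos : 0 < degIn G v Aᶜ)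
    (hn : n ≤ ∑ x ∈ Aᶜ, degIn G x B) :
    32 * (transNum (restrict G A) : ℤ) + 3 * n ≤
      ∑ x ∈ B, weight (deg G x) + ∑ x ∈ A \ B, weight (degIn G x A) + 4 := by
  have hpot := h.potential_restrict_add_excess_le hBA hB hv hn
  have hadd := degIn_add_degIn_compl G v A
  have deg_v : deg (restrict G A) v = degIn G v A := by rw [deg_restrict, if_pos (hBA hv)]
  have h₃ := fun hv => hA.le_add_three ⟨v, hv⟩
  have h₄ := fun hv => hA.le_add_four (.inl ⟨v, hv⟩)
  have h₆ := hA.le_add_six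
  obtain hout | hout : degIn G v Aᶜ = 1 ∨ degIn G v Aᶜ = 2 := by have := hB v hv; omega
  all_goals
    rw [hout] at hadd hpot
    obtain hdeg | hdeg | hdeg : deg G v = 3 ∨ deg G v = 4 ∨ deg G v = 5 := by
      have := h.deg_mem v
      omega
    all_goals
      simp only [hdeg, excess] at hadd hpot
      norm_num at hpot
      omega

end ReducedConfig

section TwoEdgeCut

variable {V : Type*} {G : SimpleGraph V} {S : Finset V} {u v u' v' : V}

/-- The disjoint edges `uu'` and `vv'` are the only ones leaving `S`, with `u` and `v` inside. -/
structure IsTwoEdgeCut (G : SimpleGraph V) (S : Finset V) (u v u' v' : V) : Prop where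
  adj_left : G.Adj u u'
  adj_right : G.Adj v v'
  mem_left : u ∈ S
  mem_right : v ∈ S
  notMem_left : u' ∉ S
  notMem_right : v' ∉ S
  ne : u ≠ v
  ne' : u' ≠ v'
  eq_or_eq : ∀ x ∈ S, ∀ y ∉ S, G.Adj x y → (x = u ∧ y = u') ∨ (x = v ∧ y = v')

lemma IsTwoEdgeCut.swap (h : IsTwoEdgeCut G S u v u' v') : IsTwoEdgeCut G S v u v' u' :=
  ⟨h.adj_right, h.adj_left, h.mem_right, h.mem_left, h.notMem_right, h.notMem_left, h.ne.symm,
    h.ne'.symm, fun x hx y hy hxy => (h.eq_or_eq x hx y hy hxy).symm⟩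

variable [Fintype V]

lemma IsTwoEdgeCut.compl (h : IsTwoEdgeCut G S u v u' v') : IsTwoEdgeCut G Sᶜ u' v' u v :=
  ⟨h.adj_left.symm, h.adj_right.symm, Finset.mem_compl.2 h.notMem_left,
    Finset.mem_compl.2 h.notMem_right, by simpa using h.mem_left, by simpa using h.mem_right,
    h.ne', h.ne, fun x hx y hy hxy =>
      (h.eq_or_eq y (by simpa using hy) x (by simpa using hx) hxy.symm).imp And.symm And.symm⟩

lemma IsTwoEdgeCut.transNum_le (h : IsTwoEdgeCut G S u v u' v') :
    transNum G ≤ 1 + transNum (restrict G (S \ {u})) + transNum (restrict G Sᶜ) := by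
  obtain ⟨-, adj_right, mem_left, mem_right, -, notMem_right, ne, -, eq_or_eq⟩ := h
  have hcut : IsBridgeCut (restrict G {u}ᶜ) (S \ {u}) v v' :=
    ⟨⟨adj_right, by grind [Finset.mem_compl], by grind [Finset.mem_compl]⟩, by grind, by grind,
      fun x hx y hy hxy => by
      have := eq_or_eq x (by grind) y
      grind [Finset.mem_compl, restrict_adj]⟩
  have := transNum_le_one_add_restrict G u
  have := hcut.transNum_le
  have : transNum (restrict (restrict G {u}ᶜ) (S \ {u})) ≤ transNum (restrict G (S \ {u})) :=
    transNum_restrict_restrict_le G Finset.inter_subset_right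
  have : transNum (restrict (restrict G {u}ᶜ) (S \ {u})ᶜ) ≤ transNum (restrict G Sᶜ) :=
    transNum_restrict_restrict_le G (by grind [Finset.mem_compl])
  omega

lemma IsTwoEdgeCut.bound_sdiff (h : IsTwoEdgeCut G S u v u' v') (hG : ReducedConfig G) :
    PotentialBound (restrict G (S \ {u})) := by
  refine hG.bound_restrict (u := u) (by simp) (deg_pos.2 ⟨u', h.adj_left⟩)
    ((hG.connected_singleton u).restrict_of_unique_attachment (y := v) (by simp)
      fun a ha b hb hbu hab => ?_)
  have := h.eq_or_eq a (by grind) b (by grind) hab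
  grind

lemma IsTwoEdgeCut.degIn_le_two (h : IsTwoEdgeCut G S u v u' v') {x : V} (hx : x ∈ S \ {u}) :
    degIn G x (S \ {u})ᶜ ≤ 2 := by
  refine (degIn_le_card_of_forall_mem (T := {u, v'}) fun y hy hxy => ?_).trans Finset.card_le_two
  have := h.eq_or_eq x (by grind) y
  grind [Finset.mem_compl]

lemma IsTwoEdgeCut.degIn_right (h : IsTwoEdgeCut G S u v u' v') :
    degIn G v (S \ {u})ᶜ = 1 + if G.Adj u v then 1 else 0 := by
  have hout : degIn G v (S \ {u})ᶜ = degIn G v (insert u {v'}) := degIn_congr fun y => by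
    have := h.eq_or_eq v h.mem_right y
    have := h.notMem_right
    have := h.ne
    have := h.adj_right
    grind [Finset.mem_compl]
  rw [hout, degIn_insert G v (by grind [h.mem_left, h.notMem_right]), degIn_singleton,
    if_pos h.adj_right, G.adj_comm]

lemma IsTwoEdgeCut.deg_left_le (h : IsTwoEdgeCut G S u v u' v') :
    deg G u ≤ ∑ x ∈ (S \ {u})ᶜ, degIn G x (S \ {u}) := by
  obtain ⟨adj_left, adj_right, mem_left, mem_right, notMem_left, notMem_right, ne, -, eq_or_eq⟩ := h
  have deg_u : deg G u = degIn G u (S \ {u}) + 1 := by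
    have hout : degIn G u (S \ {u})ᶜ = degIn G u {u'} := degIn_congr fun y => by
      have := eq_or_eq u mem_left y
      grind [Finset.mem_compl, G.irrefl]
    rw [← degIn_add_degIn_compl G u (S \ {u}), hout, degIn_singleton, if_pos adj_left]
  have degIn_v' : 0 < degIn G v' (S \ {u}) := degIn_pos.2 ⟨v, by grind, adj_right.symm⟩
  calc deg G u ≤ degIn G u (S \ {u}) + degIn G v' (S \ {u}) := by omega
    _ ≤ ∑ x ∈ (S \ {u})ᶜ, degIn G x (S \ {u}) :=
      Finset.add_le_sum (f := fun x => degIn G x (S \ {u})) (i := u) (j := v') (s := (S \ {u})ᶜ)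
        (fun _ _ => Nat.zero_le _) (by grind [Finset.mem_compl]) (by grind [Finset.mem_compl])
        (by grind)

lemma IsTwoEdgeCut.transNum_sdiff_left_le (h : IsTwoEdgeCut G S u v u' v') (hG : ReducedConfig G)
    (hdeg : deg G u = 3 → deg G v = 3) :
    32 * (transNum (restrict G (S \ {u})) : ℤ) + 16 ≤ ∑ x ∈ S, weight (deg G x) := by
  have hv : v ∈ S \ {u} := by grind [h.mem_right, h.ne]
  have hdegIn := fun x => h.degIn_le_two (x := x)
  have degIn_v := h.degIn_right
  have hbound := h.bound_sdiff hG
  rw [← Finset.sum_sdiff (Finset.singleton_subset_iff.2 h.mem_left), Finset.sum_singleton]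
  obtain deg_u | deg_u | deg_u : deg G u = 3 ∨ deg G u = 4 ∨ deg G u = 5 := by
    have := hG.deg_mem u
    have := deg_pos.2 ⟨u', h.adj_left⟩
    omega
  · have hpot := hG.potential_restrict_add_excess_le subset_rfl hdegIn hv h.deg_left_le
    have hadd := degIn_add_degIn_compl G v (S \ {u})
    rw [Finset.sdiff_self, Finset.sum_empty, degIn_v, deg_u, hdeg deg_u] at hpot
    rw [degIn_v, hdeg deg_u] at hadd
    rw [deg_u]
    split_ifs at hpot hadd
    · have := hbound.le_add_three ⟨v, .inl (by rw [deg_restrict, if_pos hv]; omega)⟩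
      norm_num [excess] at hpot ⊢
      linarith
    · have := hbound.le_add_six
      norm_num [excess] at hpot ⊢
      linarith
  all_goals
    have := hG.transNum_restrict_le hbound subset_rfl hdegIn hv (by omega) h.deg_left_le
    rw [Finset.sdiff_self, Finset.sum_empty, deg_u] at this
    rw [deg_u]
    norm_num at this ⊢
    linarith

lemma IsTwoEdgeCut.exists_transNum_sdiff_le (h : IsTwoEdgeCut G S u v u' v')
    (hG : ReducedConfig G) : ∃ x ∈ ({u, v} : Finset V),
      32 * (transNum (restrict G (S \ {x})) : ℤ) + 16 ≤ ∑ y ∈ S, weight (deg G y) := by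
  by_cases hdeg : deg G u = 3 → deg G v = 3
  · exact ⟨u, by simp, h.transNum_sdiff_left_le hG hdeg⟩
  · exact ⟨v, by simp, h.swap.transNum_sdiff_left_le hG (by tauto)⟩

lemma IsTwoEdgeCut.le_potential (h : IsTwoEdgeCut G S u v u' v') (hG : ReducedConfig G) :
    32 * (transNum G : ℤ) ≤ potential G := by
  obtain ⟨x, hx, hxS⟩ := h.exists_transNum_sdiff_le hG
  obtain ⟨y, hy, hyS⟩ := h.compl.exists_transNum_sdiff_le hG
  have hcrit := hG.critical.transNum_restrict_add_lt disjoint_compl_right h.adj_left h.mem_left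
    (Finset.mem_compl.2 h.notMem_left)
  have left_le : transNum G ≤ 1 + transNum (restrict G (S \ {x})) + transNum (restrict G Sᶜ) := by
    obtain rfl | rfl : x = u ∨ x = v := by simpa using hx
    exacts [h.transNum_le, h.swap.transNum_le]
  have right_le : transNum G ≤ 1 + transNum (restrict G (Sᶜ \ {y})) + transNum (restrict G S) := by
    rw [← compl_compl S, compl_compl Sᶜ]
    obtain rfl | rfl : y = u' ∨ y = v' := by simpa using hy
    exacts [h.compl.transNum_le, h.compl.swap.transNum_le]
  have hpot : potential G = ∑ x ∈ S, weight (deg G x) + ∑ x ∈ Sᶜ, weight (deg G x) :=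
    (Finset.sum_add_sum_compl S _).symm
  omega

end TwoEdgeCut

section VertexEdgeCut

variable {V : Type*} {G : SimpleGraph V} {S T : Finset V} {u a b : V}

/-- The vertex `u` and the edge `ab` separate `G`: the sets `S ∋ a` and `T ∋ b` partition the
vertices other than `u`, and `ab` is the only edge between them. -/
structure IsVertexEdgeCut (G : SimpleGraph V) (u : V) (S T : Finset V) (a b : V) : Prop where
  notMem : u ∉ S
  mem_iff : ∀ x, x ∈ T ↔ x ≠ u ∧ x ∉ S
  mem_left : a ∈ S
  mem_right : b ∈ T
  adj : G.Adj a b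
  eq_and_eq : ∀ x ∈ S, ∀ y ∈ T, G.Adj x y → x = a ∧ y = b

namespace IsVertexEdgeCut

lemma swap (h : IsVertexEdgeCut G u S T a b) : IsVertexEdgeCut G u T S b a where
  notMem := by simp [h.mem_iff]
  mem_iff x := by
    have := h.mem_iff x
    have : x ∈ S → x ≠ u := fun hx => ne_of_mem_of_not_mem hx h.notMem
    tauto
  mem_left := h.mem_right
  mem_right := h.mem_left
  adj := h.adj.symm
  eq_and_eq x hx y hy hxy := (h.eq_and_eq y hy x hx hxy.symm).symm

lemma notMem_right (h : IsVertexEdgeCut G u S T a b) : b ∉ S :=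
  ((h.mem_iff b).1 h.mem_right).2

lemma disjoint (h : IsVertexEdgeCut G u S T a b) : Disjoint S T :=
  Finset.disjoint_right.2 fun x hx => ((h.mem_iff x).1 hx).2

lemma eq_or_eq_and_eq (h : IsVertexEdgeCut G u S T a b) {x y : V} (hx : x ∈ S) (hy : y ∉ S)
    (hxy : G.Adj x y) : y = u ∨ (x = a ∧ y = b) := by
  have := h.eq_and_eq x hx y
  have := h.mem_iff y
  tauto

lemma ne_left (h : IsVertexEdgeCut G u S T a b) : u ≠ a :=
  (ne_of_mem_of_not_mem h.mem_left h.notMem).symm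

lemma degIn_vertex (h : IsVertexEdgeCut G u S T a b) :
    degIn G u S = degIn G u (S \ {a}) + if G.Adj u a then 1 else 0 :=
  degIn_eq_sdiff_add G u h.mem_left

lemma adj_or_adj (h : IsVertexEdgeCut G u S T a b) {x y : V} (hx : x ∈ S \ {a})
    (hy : y ∉ S \ {a}) (hxy : G.Adj x y) : y = u ∨ y = a := by
  have := h.eq_or_eq_and_eq (x := x) (y := y)
  grind

variable [Fintype V]

lemma compl_eq (h : IsVertexEdgeCut G u S T a b) : Sᶜ = insert u T := by
  ext x
  have := h.mem_iff x
  have := h.notMem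
  grind [Finset.mem_compl]

lemma deg_left (h : IsVertexEdgeCut G u S T a b) :
    deg G a = degIn G a (S \ {a}) + 1 + if G.Adj u a then 1 else 0 := by
  have hout : degIn G a (S \ {a})ᶜ = degIn G a (insert u {b}) := degIn_congr fun y => by
    have := h.eq_or_eq_and_eq (y := y) h.mem_left
    have := h.notMem
    have := h.notMem_right
    grind [Finset.mem_compl, G.irrefl]
  have hub : u ≠ b := ((h.mem_iff b).1 h.mem_right).1.symm
  rw [← degIn_add_degIn_compl G a (S \ {a}), hout, degIn_insert G a (by simpa using hub),
    degIn_singleton, if_pos h.adj, G.adj_comm, add_assoc]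

lemma deg_vertex (h : IsVertexEdgeCut G u S T a b) : deg G u = degIn G u S + degIn G u T := by
  rw [← degIn_add_degIn_compl G u S, h.compl_eq, degIn_insert_self]

lemma potential_eq (h : IsVertexEdgeCut G u S T a b) : potential G =
    ∑ x ∈ S, weight (deg G x) + ∑ x ∈ T, weight (deg G x) + weight (deg G u) := by
  rw [potential, ← Finset.sum_add_sum_compl S, h.compl_eq, Finset.sum_insert h.swap.notMem]
  ring

lemma degIn_left_pos (h : IsVertexEdgeCut G u S T a b) (hG : ReducedConfig G) :
    0 < degIn G a (S \ {a}) := by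
  have := h.deg_left
  have := hG.deg_eq_zero_or a
  split_ifs at * <;> omega

lemma not_forall_eq_of_adj (h : IsVertexEdgeCut G u S T a b) (hG : ReducedConfig G) :
    ¬ ∀ x ∈ S, G.Adj u x → x = a := fun hall => by
  obtain ⟨c, hcS, hac⟩ := degIn_pos.1 (h.degIn_left_pos hG)
  refine (hG.connected_singleton a).not_isSeparation (S := S \ {a}) (T := Sᶜ)
    ⟨by simp, fun x => by grind [Finset.mem_compl, h.mem_left], fun x hx y hy hxy => ?_,
      ⟨c, hcS, deg_pos.2 ⟨a, hac.symm⟩⟩,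
      ⟨b, Finset.mem_compl.2 h.notMem_right, deg_pos.2 ⟨a, h.adj.symm⟩⟩⟩
  have := h.eq_or_eq_and_eq (x := x) (y := y)
  have := hall x
  have := hxy.symm
  grind [Finset.mem_compl]

lemma le_potential_or_two_le (h : IsVertexEdgeCut G u S T a b) (hG : ReducedConfig G) :
    32 * (transNum G : ℤ) ≤ potential G ∨ 2 ≤ degIn G u S := by
  obtain hzero | hone | htwo : degIn G u S = 0 ∨ degIn G u S = 1 ∨ 2 ≤ degIn G u S := by omega
  · exact absurd (fun x hx hux => absurd hux (degIn_eq_zero.1 hzero x hx))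
      (h.not_forall_eq_of_adj hG)
  · obtain ⟨s, hs, hus, hs_unique⟩ := exists_adj_and_forall_eq_of_degIn_eq_one hone
    have hsa : s ≠ a := by
      rintro rfl
      exact h.not_forall_eq_of_adj hG hs_unique
    refine .inl (IsTwoEdgeCut.le_potential (S := S) (u := a) (v := s) (u' := b) (v' := u)
      ⟨h.adj, hus.symm, h.mem_left, hs, h.notMem_right, h.notMem, hsa.symm,
        ((h.mem_iff b).1 h.mem_right).1, fun x hx y hy hxy => ?_⟩ hG)
    have := h.eq_or_eq_and_eq hx hy hxy
    have := hs_unique x hx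
    have := hxy.symm
    grind
  · exact .inr htwo

/-- If `u` and `a` had a common only neighbour `s` in `S \ {a}`, it would be a cut vertex. -/
lemma ne_of_forall_adj_eq (h : IsVertexEdgeCut G u S T a b) (hG : ReducedConfig G) {s t : V}
    (hs : s ∈ S \ {a}) (has : G.Adj a s) (hs_unique : ∀ x ∈ S \ {a}, G.Adj a x → x = s)
    (ht_unique : ∀ x ∈ S \ {a}, G.Adj u x → x = t) : s ≠ t := by
  rintro rfl
  have hout : degIn G s (S \ {a, s})ᶜ ≤ 2 := by
    refine (degIn_le_card_of_forall_mem (T := {a, u}) fun y hy hsy => ?_).trans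
      Finset.card_le_two
    have := h.adj_or_adj (y := y) hs
    grind [Finset.mem_compl, G.irrefl]
  have hin : 0 < degIn G s (S \ {a, s}) := by
    have := degIn_add_degIn_compl G s (S \ {a, s})
    have := deg_pos.2 ⟨a, has.symm⟩
    have := hG.deg_eq_zero_or s
    omega
  obtain ⟨c, hc, hsc⟩ := degIn_pos.1 hin
  refine (hG.connected_singleton s).not_isSeparation (S := S \ {a, s}) (T := (S \ {a})ᶜ)
    ⟨by simp, fun x => by grind [Finset.mem_compl], fun x hx y hy hxy => ?_,
      ⟨c, hc, deg_pos.2 ⟨s, hsc.symm⟩⟩, ⟨a, by simp, deg_pos.2 ⟨s, has⟩⟩⟩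
  have := h.adj_or_adj (x := x) (y := y)
  have := hs_unique x
  have := ht_unique x
  have := hxy.symm
  grind [Finset.mem_compl]

lemma le_potential_of_adj (h : IsVertexEdgeCut G u S T a b) (hG : ReducedConfig G)
    (hua : G.Adj u a) (deg_a : deg G a = 3) (degIn_u : degIn G u S = 2) :
    32 * (transNum G : ℤ) ≤ potential G := by
  have hdeg := h.deg_left
  have hdegIn := h.degIn_vertex
  rw [if_pos hua] at hdeg hdegIn
  obtain ⟨s, hs, has, hs_unique⟩ :=
    exists_adj_and_forall_eq_of_degIn_eq_one (G := G) (v := a) (S := S \ {a}) (by omega)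
  obtain ⟨t, ht, hut, ht_unique⟩ :=
    exists_adj_and_forall_eq_of_degIn_eq_one (G := G) (v := u) (S := S \ {a}) (by omega)
  have := h.notMem
  refine IsTwoEdgeCut.le_potential (S := S \ {a}) (u := s) (v := t) (u' := a) (v' := u)
    ⟨has.symm, hut.symm, hs, ht, by simp, by grind,
      h.ne_of_forall_adj_eq hG hs has hs_unique ht_unique, h.ne_left.symm,
      fun x hx y hy hxy => ?_⟩ hG
  have := h.adj_or_adj hx hy hxy
  have := hs_unique x hx
  have := ht_unique x hx
  have := hxy.symm
  grind

lemma transNum_le (h : IsVertexEdgeCut G u S T a b) :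
    transNum G ≤ 1 + transNum (restrict G S) + transNum (restrict G T) := by
  have hcut : IsBridgeCut (restrict G {u}ᶜ) S a b :=
    ⟨⟨h.adj, by simpa using h.ne_left.symm, by simpa using h.swap.ne_left.symm⟩, h.mem_left,
      h.notMem_right, fun x hx y hy hxy =>
        (h.eq_or_eq_and_eq hx hy hxy.1).resolve_left (by simpa using hxy.2.2)⟩
  have := transNum_le_one_add_restrict G u
  have := hcut.transNum_le
  have : transNum (restrict (restrict G {u}ᶜ) S) ≤ transNum (restrict G S) :=
    transNum_restrict_restrict_le G Finset.inter_subset_right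
  have : transNum (restrict (restrict G {u}ᶜ) Sᶜ) ≤ transNum (restrict G T) :=
    transNum_restrict_restrict_le G (by rw [h.compl_eq]; grind [Finset.mem_compl])
  omega

lemma transNum_insert_add_transNum_insert_lt (h : IsVertexEdgeCut G u S T a b)
    (hG : ReducedConfig G) :
    transNum (restrict G (insert u S)) + transNum (restrict G (insert u T)) < transNum G := by
  have hcrit := hG.critical s(a, b) h.adj
  obtain ⟨X, hcard, hX⟩ := exists_isTransversal_card_eq (G.deleteEdges {s(a, b)})
  have transNum_le_card_inter (Q : Finset V) (hQ : a ∉ Q ∨ b ∉ Q) :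
      transNum (restrict G Q) ≤ (X ∩ Q).card := by
    refine le_trans (transNum_mono fun x y hxy => ?_) (transNum_restrict_le hX Q)
    rw [restrict_adj, deleteEdges_singleton_adj]
    grind [restrict_adj]
  have hub := h.swap.ne_left
  have hua := h.ne_left
  have haT := h.swap.notMem_right
  have hbS := h.notMem_right
  have hdisj := Finset.disjoint_left.1 h.disjoint
  have huS := h.notMem
  have huT := h.swap.notMem
  by_cases hu : u ∈ X
  · have hS := transNum_le_card_inter S (.inr hbS)
    have hT := transNum_le_card_inter T (.inl haT)
    have : (insert u (X ∩ S ∪ X ∩ T)).card ≤ X.card := Finset.card_le_card (by grind)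
    rw [Finset.card_insert_of_notMem (by grind), Finset.card_union_of_disjoint
      (h.disjoint.mono Finset.inter_subset_right Finset.inter_subset_right)] at this
    have := h.transNum_le
    omega
  · have hS := transNum_le_card_inter (insert u S) (.inr (by grind))
    have hT := transNum_le_card_inter (insert u T) (.inl (by grind))
    have : (X ∩ insert u S ∪ X ∩ insert u T).card ≤ X.card := Finset.card_le_card (by grind)
    rw [Finset.card_union_of_disjoint (Finset.disjoint_left.2 (by grind))] at this
    omega

lemma transNum_le_insert_sdiff_add_insert (h : IsVertexEdgeCut G u S T a b) : transNum G ≤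
    1 + transNum (restrict G (insert u (S \ {a}))) + transNum (restrict G (insert u T)) := by
  have hsum : IsOneSum (restrict G {a}ᶜ) (insert u (S \ {a})) (insert u T) u := by
    refine ⟨fun x y hxy => ?_, fun x => by grind [h.mem_iff x]⟩
    rw [restrict_adj] at hxy
    have := h.mem_iff x
    have := h.mem_iff y
    have := h.eq_and_eq x
    have := h.eq_and_eq y
    have := hxy.1.symm
    grind [Finset.mem_compl]
  have := transNum_le_one_add_restrict G a
  have := hsum.transNum_le
  have hS := transNum_restrict_restrict_le G (S := {a}ᶜ) (T := insert u (S \ {a}))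
    Finset.inter_subset_right
  have hT := transNum_restrict_restrict_le G (S := {a}ᶜ) (T := insert u T)
    Finset.inter_subset_right
  omega

lemma transNum_le_insert_sdiff_add_insert_sdiff (h : IsVertexEdgeCut G u S T a b)
    (hG : ReducedConfig G) : transNum G ≤ 1 + transNum (restrict G (insert u (S \ {a}))) +
      transNum (restrict G (insert u (T \ {b}))) := by
  have := h.transNum_insert_add_transNum_insert_lt hG
  have := h.transNum_le_insert_sdiff_add_insert
  have := h.swap.transNum_le_insert_sdiff_add_insert
  omega

lemma bound_insert_sdiff (h : IsVertexEdgeCut G u S T a b) (hG : ReducedConfig G) :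
    PotentialBound (restrict G (insert u (S \ {a}))) := by
  refine hG.bound_restrict (u := a) (by grind [h.ne_left]) (deg_pos.2 ⟨b, h.adj⟩)
    ((hG.connected_singleton a).restrict_of_unique_attachment (y := u) (by simp [h.ne_left.symm])
      fun x hx y hy hya hxy => ?_)
  have := h.eq_or_eq_and_eq (x := x) (y := y)
  grind

/-- The weight of `S` pays for deleting `a` and for lowering the degree of `u` to its degree
inside `S \ {a}`. -/
lemma transNum_insert_sdiff_le (h : IsVertexEdgeCut G u S T a b) (hG : ReducedConfig G) :
    32 * (transNum (restrict G (insert u (S \ {a}))) : ℤ) + 3 * degIn G a (S \ {a}) +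
        weight (deg G a) ≤
      ∑ x ∈ S, weight (deg G x) + weight (degIn G u (S \ {a})) +
        if degIn G u (S \ {a}) = 1 then 3 else 4 := by
  have huS : u ∉ S \ {a} := by grind [h.notMem]
  have hsub : S \ {a} ⊆ insert u (S \ {a}) := Finset.subset_insert _ _
  obtain ⟨c, hc, hac⟩ := degIn_pos.1 (h.degIn_left_pos hG)
  have degIn_le_two (x : V) (hx : x ∈ S \ {a}) : degIn G x (insert u (S \ {a}))ᶜ ≤ 2 := by
    refine (degIn_le_card_of_forall_mem (T := {a}) fun y hy hxy => ?_).trans (by simp)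
    have := h.adj_or_adj (y := y) hx
    grind [Finset.mem_compl]
  have hn : degIn G a (S \ {a}) ≤ ∑ x ∈ (insert u (S \ {a}))ᶜ, degIn G x (S \ {a}) :=
    Finset.single_le_sum (f := fun x => degIn G x (S \ {a})) (fun _ _ => Nat.zero_le _)
      (by grind [Finset.mem_compl, h.ne_left])
  have hpos : 0 < degIn G c (insert u (S \ {a}))ᶜ :=
    degIn_pos.2 ⟨a, by grind [Finset.mem_compl, h.ne_left], hac.symm⟩
  have hpot := hG.potential_restrict_add_excess_le hsub degIn_le_two hc hn
  have htrans := hG.transNum_restrict_le (h.bound_insert_sdiff hG) hsub degIn_le_two hc hpos hn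
  have hexcess := excess_nonneg (hG.deg_mem c) (.inl (degIn_le_two c hc)) (degIn_le_deg G c _)
  rw [Finset.insert_sdiff_cancel huS, Finset.sum_singleton, degIn_insert_self] at hpot htrans
  rw [← Finset.sum_sdiff (Finset.singleton_subset_iff.2 h.mem_left), Finset.sum_singleton]
  split_ifs with degIn_u
  · have := (h.bound_insert_sdiff hG).le_add_three
      ⟨u, .inl (by rw [deg_restrict, if_pos (by simp), degIn_insert_self, degIn_u])⟩
    linarith
  · linarith

lemma transNum_restrict_add_two_le (h : IsVertexEdgeCut G u S T a b) (hG : ReducedConfig G)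
    (deg_a : deg G a = 3) (hua : ¬ G.Adj u a) :
    32 * (transNum (restrict G S) : ℤ) + 3 * degIn G u S + 2 ≤ ∑ x ∈ S, weight (deg G x) := by
  have huS := h.notMem
  have hbS := h.notMem_right
  have hbound : PotentialBound (restrict G S) :=
    hG.bound_restrict hbS (deg_pos.2 ⟨a, h.adj.symm⟩)
      ((hG.connected_singleton u).restrict_of_unique_attachment (y := a) (by simpa using huS)
        fun x hx y hy hyu hxy => by grind [h.eq_or_eq_and_eq hx hy hxy])
  have degIn_le_two (x : V) (hx : x ∈ S) : degIn G x Sᶜ ≤ 2 :=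
    (degIn_le_card_of_forall_mem (T := {u, b}) fun y hy hxy => by
      grind [h.eq_or_eq_and_eq hx (Finset.mem_compl.1 hy) hxy]).trans Finset.card_le_two
  have hn : degIn G u S + 1 ≤ ∑ x ∈ Sᶜ, degIn G x S := by
    have : 0 < degIn G b S := degIn_pos.2 ⟨a, h.mem_left, h.adj.symm⟩
    have := Finset.add_le_sum (f := fun x => degIn G x S) (i := u) (j := b) (s := Sᶜ)
      (fun _ _ => Nat.zero_le _) (by grind [Finset.mem_compl]) (by grind [Finset.mem_compl])
      h.swap.ne_left
    omega
  have hout : degIn G a Sᶜ = degIn G a {b} := degIn_congr fun y => by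
    have := h.eq_or_eq_and_eq (y := y) h.mem_left
    have := G.adj_comm a u
    grind [Finset.mem_compl]
  have hpot := hG.potential_restrict_add_excess_le subset_rfl degIn_le_two h.mem_left hn
  rw [Finset.sdiff_self, Finset.sum_empty, hout, degIn_singleton, if_pos h.adj, deg_a] at hpot
  have := hbound.le_add_six
  norm_num [excess] at hpot
  linarith

lemma transNum_insert_sdiff_add_le_of_degIn_eq_two (h : IsVertexEdgeCut G u S T a b)
    (hG : ReducedConfig G) (hu : degIn G u S = 2) (ha : G.Adj u a → deg G a ≠ 3) :
    32 * (transNum (restrict G (insert u (S \ {a}))) : ℤ) + (if deg G a = 3 then 10 else 15) ≤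
      ∑ x ∈ S, weight (deg G x) := by
  have hle := h.transNum_insert_sdiff_le hG
  have hdeg := h.deg_left
  have hdegIn := h.degIn_vertex
  have hmem := hG.deg_mem a
  generalize deg G a = d at *
  split_ifs at hdeg hdegIn with hua
  · obtain rfl | rfl : d = 4 ∨ d = 5 := by have := ha hua; omega
    all_goals
      rw [show degIn G u (S \ {a}) = 1 by omega] at hle
      norm_num at hle ⊢
      omega
  · obtain rfl | rfl | rfl : d = 3 ∨ d = 4 ∨ d = 5 := by omega
    all_goals
      rw [show degIn G u (S \ {a}) = 2 by omega] at hle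
      norm_num at hle ⊢
      omega

lemma transNum_insert_sdiff_add_le_of_degIn_eq_three (h : IsVertexEdgeCut G u S T a b)
    (hG : ReducedConfig G) (hu : degIn G u S = 3) :
    32 * (transNum (restrict G (insert u (S \ {a}))) : ℤ) +
        (if deg G a = 3 ∧ ¬ G.Adj u a then 2 else 7) ≤ ∑ x ∈ S, weight (deg G x) := by
  have hle := h.transNum_insert_sdiff_le hG
  have hdeg := h.deg_left
  have hdegIn := h.degIn_vertex
  have hmem := hG.deg_mem a
  generalize deg G a = d at *
  split_ifs at hdeg hdegIn with hua
  all_goals obtain rfl | rfl | rfl : d = 3 ∨ d = 4 ∨ d = 5 := by omega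
  all_goals
    first
    | rw [show degIn G u (S \ {a}) = 2 by omega] at hle
    | rw [show degIn G u (S \ {a}) = 3 by omega] at hle
    norm_num [hua] at hle ⊢
    omega

lemma le_potential_of_degIn_eq_two (h : IsVertexEdgeCut G u S T a b) (hG : ReducedConfig G)
    (hS : degIn G u S = 2) (hT : 2 ≤ degIn G u T) (ha : G.Adj u a → deg G a ≠ 3)
    (hb : degIn G u T = 2 → G.Adj u b → deg G b ≠ 3) :
    32 * (transNum G : ℤ) ≤ potential G := by
  have hpot := h.potential_eq
  have hdeg := h.deg_vertex
  have hle_insert := h.transNum_le_insert_sdiff_add_insert_sdiff hG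
  have hS_le := h.transNum_insert_sdiff_add_le_of_degIn_eq_two hG hS ha
  have hdeg_le := hG.deg_le u
  obtain hT | hT : degIn G u T = 2 ∨ degIn G u T = 3 := by omega
  · have hT_le := h.swap.transNum_insert_sdiff_add_le_of_degIn_eq_two hG hT (hb hT)
    rw [hdeg, hS, hT, weight_four] at hpot
    grind
  have hT_le := h.swap.transNum_insert_sdiff_add_le_of_degIn_eq_three hG hT
  rw [hdeg, hS, hT, weight_five] at hpot
  by_cases hab : deg G a = 3 ∧ deg G b = 3 ∧ ¬ G.Adj u b
  · obtain ⟨deg_a, deg_b, hub⟩ := hab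
    have := h.transNum_restrict_add_two_le hG deg_a fun hua => ha hua deg_a
    have := h.swap.transNum_restrict_add_two_le hG deg_b hub
    have := h.transNum_le
    omega
  · split_ifs at hS_le hT_le <;> first | omega | tauto

lemma le_potential (h : IsVertexEdgeCut G u S T a b) (hG : ReducedConfig G) :
    32 * (transNum G : ℤ) ≤ potential G := by
  by_contra hlt
  have hS := (h.le_potential_or_two_le hG).resolve_left hlt
  have hT := (h.swap.le_potential_or_two_le hG).resolve_left hlt
  have ha (hS : degIn G u S = 2) (hua : G.Adj u a) (deg_a : deg G a = 3) : False :=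
    hlt (h.le_potential_of_adj hG hua deg_a hS)
  have hb (hT : degIn G u T = 2) (hub : G.Adj u b) (deg_b : deg G b = 3) : False :=
    hlt (h.swap.le_potential_of_adj hG hub deg_b hT)
  obtain hS | hT' : degIn G u S = 2 ∨ degIn G u T = 2 := by
    have := h.deg_vertex
    have := hG.deg_le u
    omega
  · exact hlt (h.le_potential_of_degIn_eq_two hG hS hT (ha hS) hb)
  · exact hlt (h.swap.le_potential_of_degIn_eq_two hG hT' hS (hb hT') ha)

end IsVertexEdgeCut

end VertexEdgeCut

section PairSeparation

variable {V : Type*} [Fintype V] {G : SimpleGraph V} {S T W P Q : Finset V} {u v x : V}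

lemma mem_and_deg_pos_of_deg_restrict_pos (h : 0 < deg (restrict G S) x) : x ∈ S ∧ 0 < deg G x := by
  refine ⟨?_, h.trans_le (deg_restrict_le G S x)⟩
  by_contra hx
  rw [deg_restrict, if_neg hx] at h
  exact h.false

namespace IsSeparation

lemma inter_of_restrict (h : IsSeparation G W S T) (hS : IsSeparation (restrict G S) ∅ P Q) :
    IsSeparation G W (S ∩ P) (S \ P ∪ T) where
  disjoint := h.disjoint.mono_left Finset.inter_subset_left
  mem_iff x := by
    have : x ∈ S → x ∉ W := fun hx => Finset.disjoint_left.1 h.disjoint hx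
    have := h.mem_iff x
    grind
  not_adj x hx y hy hxy := by
    have := hS.not_adj x (by grind) y
    have := hS.mem_iff y
    have := h.not_adj x (by grind) y
    grind [restrict_adj]
  exists_left := by
    obtain ⟨a, ha, deg_a⟩ := hS.exists_left
    obtain ⟨haS, deg_a⟩ := mem_and_deg_pos_of_deg_restrict_pos deg_a
    exact ⟨a, Finset.mem_inter.2 ⟨haS, ha⟩, deg_a⟩
  exists_right := by
    obtain ⟨b, hb, deg_b⟩ := hS.exists_right
    obtain ⟨hbS, deg_b⟩ := mem_and_deg_pos_of_deg_restrict_pos deg_b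
    exact ⟨b, Finset.mem_union_left _ (Finset.mem_sdiff.2 ⟨hbS, ((hS.mem_iff b).1 hb).1⟩), deg_b⟩

lemma pair_swap (h : IsSeparation G {u, v} S T) : IsSeparation G {v, u} S T :=
  Finset.pair_comm u v ▸ h

lemma notMem_left (h : IsSeparation G {u, v} S T) : u ∉ S := fun hu =>
  Finset.disjoint_left.1 h.disjoint hu (Finset.mem_insert_self u {v})

lemma eq_or_eq_of_adj (h : IsSeparation G {u, v} S T) {a b : V} (ha : a ∈ S) (hb : b ∉ S)
    (hab : G.Adj a b) : b = u ∨ b = v := by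
  by_contra hne
  exact h.not_adj a ha b ((h.mem_iff b).2 ⟨hb, by simpa using hne⟩) hab

lemma compl_eq_pair (h : IsSeparation G {u, v} S T) : Sᶜ = insert u (insert v T) := by
  ext x
  have := h.mem_iff x
  have := h.notMem_left
  have := h.pair_swap.notMem_left
  grind [Finset.mem_compl]

lemma deg_eq_of_pair (h : IsSeparation G {u, v} S T) :
    deg G u = degIn G u S + degIn G u T + if G.Adj u v then 1 else 0 := by
  rw [← degIn_add_degIn_compl G u S, h.compl_eq_pair, degIn_insert_self,
    degIn_insert G u h.symm.pair_swap.notMem_left, add_assoc]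

lemma potential_eq_of_pair (h : IsSeparation G {u, v} S T) (huv : u ≠ v) : potential G =
    ∑ x ∈ S, weight (deg G x) + ∑ x ∈ T, weight (deg G x) + weight (deg G u) +
      weight (deg G v) := by
  rw [potential, ← Finset.sum_add_sum_compl S, h.compl_eq_pair,
    Finset.sum_insert (by simp [huv, h.symm.notMem_left]),
    Finset.sum_insert h.symm.pair_swap.notMem_left]
  ring

lemma isVertexEdgeCut (h : IsSeparation G {u, v} S T) (huv : u ≠ v) {s : V} (hs : s ∈ S)
    (hus : G.Adj u s) (hs_unique : ∀ x ∈ S, G.Adj u x → x = s) :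
    IsVertexEdgeCut G v S (insert u T) s u := by
  refine ⟨h.pair_swap.notMem_left, fun x => ?_, hs, by simp, hus.symm, fun x hx y hy hxy => ?_⟩
  · have := h.mem_iff x
    have := h.notMem_left
    grind
  · obtain rfl | hy := Finset.mem_insert.1 hy
    · exact ⟨hs_unique x hx hxy.symm, rfl⟩
    · exact absurd hxy (h.not_adj x hx y hy)

lemma two_le_degIn_of_pair (h : IsSeparation G {u, v} S T) (hG : ReducedConfig G) (huv : u ≠ v)
    (hlt : potential G < 32 * (transNum G : ℤ)) : 2 ≤ degIn G u S := by
  obtain hzero | hone | htwo : degIn G u S = 0 ∨ degIn G u S = 1 ∨ 2 ≤ degIn G u S := by omega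
  · refine absurd ⟨by simpa using h.pair_swap.notMem_left, fun x => by grind [Finset.mem_compl],
      fun x hx y hy hxy => ?_, h.exists_left, ?_⟩
      ((hG.connected_singleton v).not_isSeparation (S := S) (T := (insert v S)ᶜ))
    · have := h.eq_or_eq_of_adj hx (b := y) (by grind [Finset.mem_compl]) hxy
      have := degIn_eq_zero.1 hzero x hx
      have := hxy.symm
      grind [Finset.mem_compl]
    · obtain ⟨b, hb, deg_b⟩ := h.exists_right
      have := h.mem_iff b
      exact ⟨b, by grind [Finset.mem_compl], deg_b⟩
  · obtain ⟨s, hs, hus, hs_unique⟩ := exists_adj_and_forall_eq_of_degIn_eq_one hone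
    exact absurd ((h.isVertexEdgeCut huv hs hus hs_unique).le_potential hG) hlt.not_ge
  · exact htwo

/-- Otherwise `{u, v}` splits `G` into three parts, each containing two neighbours of `u`. -/
lemma connectedAvoiding_restrict_of_pair (h : IsSeparation G {u, v} S T) (hG : ReducedConfig G)
    (huv : u ≠ v) (hlt : potential G < 32 * (transNum G : ℤ)) :
    ConnectedAvoiding (restrict G S) ∅ := by
  by_contra hcon
  obtain ⟨P, Q, hsep⟩ := exists_isSeparation_of_not_connectedAvoiding hcon
  have hP := (h.inter_of_restrict hsep).two_le_degIn_of_pair hG huv hlt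
  have hQ := (h.inter_of_restrict hsep.symm).two_le_degIn_of_pair hG huv hlt
  have hT := h.symm.two_le_degIn_of_pair hG huv hlt
  have hS : S = S ∩ P ∪ S ∩ Q := by
    ext x
    have := hsep.mem_iff x
    grind
  have hdisj : Disjoint (S ∩ P) (S ∩ Q) := Finset.disjoint_left.2 fun x => by
    have := hsep.mem_iff x
    grind
  have := degIn_union G u hdisj
  rw [← hS] at this
  have := h.deg_eq_of_pair
  have := hG.deg_le u
  omega

lemma transNum_insert_right_le (h : IsSeparation G {u, v} S T) (hG : ReducedConfig G)
    (huv : u ≠ v) (hu : 0 < degIn G u S) :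
    32 * (transNum (restrict G (insert v S)) : ℤ) + 3 * degIn G u S ≤
      ∑ x ∈ S, weight (deg G x) + weight (degIn G v S) + 4 := by
  obtain ⟨s, hs, hus⟩ := degIn_pos.1 hu
  have hvS := h.pair_swap.notMem_left
  have hu_insert : u ∉ insert v S := by simp [huv, h.notMem_left]
  have attachment (x : V) (hx : x ∈ insert v S) (y : V) (hy : y ∉ insert v S)
      (hyu : y ∉ ({u} : Finset V)) (hxy : G.Adj x y) : x = v := by
    have := h.eq_or_eq_of_adj (a := x) (b := y)
    grind
  have hbound : PotentialBound (restrict G (insert v S)) :=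
    hG.bound_restrict hu_insert (deg_pos.2 ⟨s, hus⟩)
      ((hG.connected_singleton u).restrict_of_unique_attachment (by simpa using hu_insert)
        attachment)
  have degIn_le_two (x : V) (hx : x ∈ S) : degIn G x (insert v S)ᶜ ≤ 2 :=
    (degIn_le_card_of_forall_mem (T := {u}) fun y hy hxy => by
      have := h.eq_or_eq_of_adj hx (b := y)
      grind [Finset.mem_compl]).trans (by simp)
  have hn : degIn G u S ≤ ∑ x ∈ (insert v S)ᶜ, degIn G x S :=
    Finset.single_le_sum (f := fun x => degIn G x S) (fun _ _ => Nat.zero_le _)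
      (Finset.mem_compl.2 hu_insert)
  have htrans := hG.transNum_restrict_le hbound (Finset.subset_insert v S) degIn_le_two hs
    (degIn_pos.2 ⟨u, Finset.mem_compl.2 hu_insert, hus.symm⟩) hn
  rwa [Finset.insert_sdiff_cancel hvS, Finset.sum_singleton, degIn_insert_self] at htrans

lemma transNum_restrict_pair_le (h : IsSeparation G {u, v} S T) (hG : ReducedConfig G)
    (huv : u ≠ v) (hu : 0 < degIn G u S) (hconn : ConnectedAvoiding (restrict G S) ∅) :
    32 * (transNum (restrict G S) : ℤ) + 3 * degIn G u S + 3 * degIn G v S ≤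
      ∑ x ∈ S, weight (deg G x) + 4 := by
  obtain ⟨s, hs, hus⟩ := degIn_pos.1 hu
  have hvS := h.pair_swap.notMem_left
  have huS := h.notMem_left
  have degIn_le_two (x : V) (hx : x ∈ S) : degIn G x Sᶜ ≤ 2 :=
    (degIn_le_card_of_forall_mem (T := {u, v}) fun y hy hxy => by
      simpa using h.eq_or_eq_of_adj hx (Finset.mem_compl.1 hy) hxy).trans Finset.card_le_two
  have hn : degIn G u S + degIn G v S ≤ ∑ x ∈ Sᶜ, degIn G x S :=
    Finset.add_le_sum (f := fun x => degIn G x S) (i := u) (j := v) (s := Sᶜ)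
      (fun _ _ => Nat.zero_le _) (by grind [Finset.mem_compl]) (by grind [Finset.mem_compl]) huv
  have htrans := hG.transNum_restrict_le (hG.bound_restrict huS (deg_pos.2 ⟨s, hus⟩) hconn)
    subset_rfl degIn_le_two hs (degIn_pos.2 ⟨u, Finset.mem_compl.2 huS, hus.symm⟩) hn
  rw [Finset.sdiff_self, Finset.sum_empty] at htrans
  push_cast at htrans
  linarith

lemma transNum_le_one_add_insert (h : IsSeparation G {u, v} S T) :
    transNum G ≤ 1 + transNum (restrict G (insert v S)) + transNum (restrict G (insert v T)) := by
  have hsum : IsOneSum (restrict G {u}ᶜ) (insert v S) (insert v T) v := by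
    refine ⟨fun x y hxy => ?_, fun x => by grind [h.mem_iff x]⟩
    rw [restrict_adj] at hxy
    have := h.mem_iff x
    have := h.mem_iff y
    have := h.not_adj x (b := y)
    have := h.not_adj y (b := x)
    have := hxy.1.symm
    grind [Finset.mem_compl]
  have := transNum_le_one_add_restrict G u
  have := hsum.transNum_le
  have hS := transNum_restrict_restrict_le G (S := {u}ᶜ) (T := insert v S)
    Finset.inter_subset_right
  have hT := transNum_restrict_restrict_le G (S := {u}ᶜ) (T := insert v T)
    Finset.inter_subset_right
  omega

lemma transNum_le_two_add (h : IsSeparation G {u, v} S T) :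
    transNum G ≤ 2 + transNum (restrict G S) + transNum (restrict G T) := by
  have hsum : IsOneSum (restrict (restrict G {u}ᶜ) {v}ᶜ) S T v := by
    refine ⟨fun x y hxy => ?_, fun x => by grind [h.mem_iff x]⟩
    simp only [restrict_adj] at hxy
    have := h.mem_iff x
    have := h.mem_iff y
    have := h.not_adj x (b := y)
    have := h.not_adj y (b := x)
    have := hxy.1.1.symm
    grind [Finset.mem_compl]
  have := transNum_le_one_add_restrict G u
  have := transNum_le_one_add_restrict (restrict G {u}ᶜ) v
  have := hsum.transNum_le
  rw [restrict_restrict] at *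
  have hS := transNum_restrict_restrict_le G (S := {u}ᶜ ∩ {v}ᶜ) (T := S) Finset.inter_subset_right
  have hT := transNum_restrict_restrict_le G (S := {u}ᶜ ∩ {v}ᶜ) (T := T) Finset.inter_subset_right
  omega

/-- Average the two preceding bounds on `transNum G`. -/
lemma transNum_le_or_transNum_le (h : IsSeparation G {u, v} S T) :
    transNum G ≤ 1 + transNum (restrict G (insert v S)) + transNum (restrict G T) ∨
      transNum G ≤ 1 + transNum (restrict G (insert v T)) + transNum (restrict G S) := by
  have := h.transNum_le_one_add_insert
  have := h.transNum_le_two_add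
  omega

lemma le_potential_of_transNum_le (h : IsSeparation G {u, v} S T) (hG : ReducedConfig G)
    (huv : u ≠ v) (hdeg : deg G v ≤ deg G u) (htrans :
      transNum G ≤ 1 + transNum (restrict G (insert v S)) + transNum (restrict G T)) :
    32 * (transNum G : ℤ) ≤ potential G := by
  by_contra! hlt
  have huS := h.two_le_degIn_of_pair hG huv hlt
  have huT := h.symm.two_le_degIn_of_pair hG huv hlt
  have hvS := h.pair_swap.two_le_degIn_of_pair hG huv.symm hlt
  have hvT := h.symm.pair_swap.two_le_degIn_of_pair hG huv.symm hlt
  have hS := h.transNum_insert_right_le hG huv (by omega)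
  have hT := h.symm.transNum_restrict_pair_le hG huv (by omega)
    (h.symm.connectedAvoiding_restrict_of_pair hG huv hlt)
  have hpot := h.potential_eq_of_pair huv
  have deg_u := h.deg_eq_of_pair
  have deg_v := h.pair_swap.deg_eq_of_pair
  have := hG.deg_le u
  rw [G.adj_comm v u] at deg_v
  obtain degIn_v | degIn_v : degIn G v S = 2 ∨ degIn G v S = 3 := by omega
  all_goals
    obtain hd | hd : deg G u = 4 ∨ deg G u = 5 := by omega
    all_goals
      obtain hd' | hd' : deg G v = 4 ∨ deg G v = 5 := by omega
      all_goals
        rw [degIn_v] at hS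
        rw [hd, hd'] at hpot
        simp only [weight_two, weight_three, weight_four, weight_five] at hS hpot
        split_ifs at deg_u deg_v <;> omega

lemma le_potential_of_pair (h : IsSeparation G {u, v} S T) (hG : ReducedConfig G) (huv : u ≠ v) :
    32 * (transNum G : ℤ) ≤ potential G := by
  wlog hdeg : deg G v ≤ deg G u generalizing u v
  · exact this h.pair_swap huv.symm (not_le.1 hdeg).le
  rcases h.transNum_le_or_transNum_le with htrans | htrans
  · exact h.le_potential_of_transNum_le hG huv hdeg htrans
  · exact h.symm.le_potential_of_transNum_le hG huv hdeg htrans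

end IsSeparation

lemma ReducedConfig.le_potential_of_not_connectedAvoiding (hG : ReducedConfig G) (huv : u ≠ v)
    (h : ¬ ConnectedAvoiding G {u, v}) : 32 * (transNum G : ℤ) ≤ potential G := by
  obtain ⟨S, T, hsep⟩ := exists_isSeparation_of_not_connectedAvoiding h
  exact hsep.le_potential_of_pair hG huv

end PairSeparation

section Triconnected

variable {V : Type*} [Fintype V] {G : SimpleGraph V} {P : Finset V} {v w x y z : V} {m : ℤ}

lemma excess_three_one : excess 3 1 = 5 := by norm_num [excess]

lemma excess_four_one : excess 4 1 = 1 := by norm_num [excess]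

lemma deg_restrict_compl_singleton_of_adj (h : G.Adj z v) :
    deg (restrict G {z}ᶜ) v + 1 = deg G v := by
  rw [← deg_restrict_compl_singleton (G := G) h.ne', if_pos h.symm]

lemma deg_restrict_compl_singleton_of_not_adj (hv : v ≠ z) (h : ¬G.Adj z v) :
    deg (restrict G {z}ᶜ) v = deg G v := by
  rw [← deg_restrict_compl_singleton (G := G) hv, if_neg fun h' => h h'.symm, add_zero]

lemma potential_eq_restrict_compl_singleton_add (G : SimpleGraph V) (z : V) :
    potential G = potential (restrict G {z}ᶜ) + weight (deg G z) + 3 * deg G z +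
      ∑ v with G.Adj z v, excess (deg G v) 1 := by
  have sum_excess : ∑ v ∈ {z}ᶜ, excess (deg G v) (degIn G v {z}) =
      ∑ v with G.Adj z v, excess (deg G v) 1 := by
    rw [Finset.sum_filter, ← Finset.sum_add_sum_compl {z}, Finset.sum_singleton,
      if_neg (G.loopless.irrefl z), zero_add]
    refine Finset.sum_congr rfl fun v _ => ?_
    rw [degIn_singleton, G.adj_comm]
    split_ifs <;> simp [excess]
  have degIn_compl : degIn G z {z}ᶜ = deg G z := by
    rw [← degIn_add_degIn_compl G z {z}, degIn_singleton, if_neg (G.loopless.irrefl z), zero_add]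
  rw [potential_eq_restrict_add_loss G {z}ᶜ, loss_eq, compl_compl, Finset.sum_singleton,
    Finset.sum_singleton, degIn_compl, sum_excess]
  ring

lemma potential_restrict_compl_singleton_add_le (hP : ∀ v ∈ P, G.Adj z v)
    (hm : ∀ v, G.Adj z v → v ∉ P → m ≤ excess (deg G v) 1) :
    potential (restrict G {z}ᶜ) + weight (deg G z) + 3 * deg G z + ∑ v ∈ P, excess (deg G v) 1 +
      m * ((deg G z : ℤ) - P.card) ≤ potential G := by
  have hsub : P ⊆ ({v | G.Adj z v} : Finset V) := fun v hv => by simpa using hP v hv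
  have hcard : (({v | G.Adj z v} : Finset V) \ P).card + P.card = deg G z :=
    Finset.card_sdiff_add_card_eq_card hsub
  have hrest := Finset.card_nsmul_le_sum (({v | G.Adj z v} : Finset V) \ P)
    (fun v => excess (deg G v) 1) m (fun v hv => by
      simp only [Finset.mem_sdiff, Finset.mem_filter, Finset.mem_univ, true_and] at hv
      exact hm v hv.1 hv.2)
  rw [potential_eq_restrict_compl_singleton_add G z, ← Finset.sum_sdiff hsub, ← hcard]
  rw [nsmul_eq_mul] at hrest
  push_cast
  linarith

lemma ConnectedAvoiding.exists_adj_of_deg_pos (hc : ConnectedAvoiding G ∅) (p : V → Prop)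
    (hx : p x) (hdx : 0 < deg G x) (hy : ¬p y) (hdy : 0 < deg G y) :
    ∃ a b, p a ∧ ¬p b ∧ G.Adj a b := by
  by_contra! hno
  rcases hc ({v | p v} : Finset V) (by simp)
    (fun a ha b hb _ => hno a b (by simpa using ha) (by simpa using hb)) with h | h
  · exact hdx.ne' (h x (by simpa using hx))
  · exact hdy.ne' (h y (by simpa using hy) (by simp))

lemma ReducedConfig.bound_restrict_compl_singleton (hG : ReducedConfig G) (hz : 0 < deg G z) :
    PotentialBound (restrict G {z}ᶜ) :=
  hG.bound_restrict (by simp) hz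
    (ConnectedAvoiding.restrict_compl (x := z) (W := ∅) (by simpa using hG.connected_singleton z))

lemma ReducedConfig.deg_mem_of_adj (hG : ReducedConfig G) (h : G.Adj z v) :
    deg G v = 3 ∨ deg G v = 4 ∨ deg G v = 5 := by
  have := hG.deg_mem v
  have := deg_pos.2 ⟨z, h.symm⟩
  omega

lemma ReducedConfig.excess_one_nonneg (hG : ReducedConfig G) (h : G.Adj z v) :
    0 ≤ excess (deg G v) 1 :=
  excess_nonneg (hG.deg_mem v) (.inl one_le_two) (deg_pos.2 ⟨z, h.symm⟩)

/-- A reduced configuration `G` that is 3-connected, up to isolated vertices. -/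
structure TriconnectedConfig (G : SimpleGraph V) : Prop extends ReducedConfig G where
  connected_pair : ∀ x y, ConnectedAvoiding G {x, y}

lemma ReducedConfig.bound_of_deg_four_adj_deg_three (hG : ReducedConfig G) (hz : deg G z = 4)
    (hzy : G.Adj z y) (hy : deg G y = 3) (h₅ : ∀ v, G.Adj z v → deg G v ≠ 5) :
    PotentialBound G := by
  have tn_le := transNum_le_one_add_restrict G z
  have bound := hG.bound_restrict_compl_singleton (z := z) (by omega)
  have deg_le := deg_restrict_le G {z}ᶜ
  have deg_nbr : ∀ v, G.Adj z v → deg G v = 3 ∨ deg G v = 4 := fun v hv => by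
    have := hG.deg_mem_of_adj hv
    have := h₅ v hv
    omega
  have excess_nbr : ∀ v, G.Adj z v → 1 ≤ excess (deg G v) 1 := fun v hv => by
    rcases deg_nbr v hv with h | h <;> simp [h, excess_three_one, excess_four_one]
  by_cases! hex : ∃ x, x ≠ y ∧ G.Adj z x ∧ deg G x = 3
  · obtain ⟨x, hxy, hzx, hx⟩ := hex
    have hpot := potential_restrict_compl_singleton_add_le (P := {x, y}) (z := z)
      (by simp [hzx, hzy]) (fun v hv _ => excess_nbr v hv)
    rw [Finset.sum_pair hxy, Finset.card_pair hxy, hz, hx, hy, excess_three_one,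
      weight_four] at hpot
    push_cast at hpot
    refine .of_le_add_three (by have := bound.le_add_six; omega) fun h₄ => ?_
    have := bound.le_add_four (.inr fun v => (deg_le v).trans (h₄ v))
    omega
  · have hpot := potential_restrict_compl_singleton_add_le (P := {y}) (z := z)
      (by simp [hzy]) (fun v hv _ => excess_nbr v hv)
    rw [Finset.sum_singleton, Finset.card_singleton, hz, hy, excess_three_one, weight_four] at hpot
    push_cast at hpot
    obtain ⟨v, hv, hzv⟩ : ∃ v ∈ ({y}ᶜ : Finset V), G.Adj z v := degIn_pos.1 (by
      have := degIn_add_degIn_compl G z {y}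
      rw [degIn_singleton, if_pos hzy] at this
      omega)
    have deg_v : deg (restrict G {z}ᶜ) v = 3 := by
      have := deg_restrict_compl_singleton_of_adj hzv
      have := deg_nbr v hzv
      have := hex v (by simpa using hv) hzv
      omega
    refine .of_le_add_three (by have := bound.le_add_three ⟨v, .inr deg_v⟩; omega) fun h₄ => ?_
    have := bound.le (fun v => (deg_le v).trans (h₄ v)) (.inl ⟨v, .inr deg_v⟩)
    omega

lemma ReducedConfig.bound_of_deg_eq_zero_or_four (hG : ReducedConfig G)
    (h : ∀ v, deg G v = 0 ∨ deg G v = 4) (hz : deg G z = 4) : PotentialBound G := by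
  have deg_nbr : ∀ v, G.Adj z v → deg G v = 4 := fun v hv =>
    (h v).resolve_left (deg_pos.2 ⟨z, hv.symm⟩).ne'
  have hpot := potential_restrict_compl_singleton_add_le (P := ∅) (z := z) (m := 1) (by simp)
    (fun v hv _ => by rw [deg_nbr v hv, excess_four_one])
  rw [Finset.sum_empty, Finset.card_empty, hz, weight_four] at hpot
  push_cast at hpot
  obtain ⟨v, hzv⟩ := deg_pos.1 (show 0 < deg G z by omega)
  have tn_le := transNum_le_one_add_restrict G z
  have deg_v := deg_restrict_compl_singleton_of_adj hzv
  have bound := (hG.bound_restrict_compl_singleton (z := z) (by omega)).le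
    (fun v => (deg_restrict_le G {z}ᶜ v).trans (by have := h v; omega))
    (.inl ⟨v, .inr (by have := deg_nbr v hzv; omega)⟩)
  have no_odd : ¬∃ v, deg G v = 1 ∨ deg G v = 3 := by
    rintro ⟨v, hv⟩
    have := h v
    omega
  refine ⟨by omega, fun _ => by omega, fun hodd => absurd hodd no_odd, fun _ hcases => ?_⟩
  rcases hcases with hodd | hsmall
  · exact absurd hodd no_odd
  · have := hsmall z
    omega

lemma ReducedConfig.bound_of_deg_eq_zero_or_three (hG : ReducedConfig G)
    (h : ∀ v, deg G v = 0 ∨ deg G v = 3) (hz : deg G z = 3) : PotentialBound G := by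
  have hpot := potential_restrict_compl_singleton_add_le (P := ∅) (z := z) (m := 5) (by simp)
    (fun v hv _ => by
      rw [(h v).resolve_left (deg_pos.2 ⟨z, hv.symm⟩).ne', excess_three_one])
  rw [Finset.sum_empty, Finset.card_empty, hz, weight_three] at hpot
  push_cast at hpot
  have tn_le := transNum_le_one_add_restrict G z
  have deg_le : ∀ v, deg (restrict G {z}ᶜ) v ≤ 3 := fun v =>
    (deg_restrict_le G {z}ᶜ v).trans (by have := h v; omega)
  have bound := (hG.bound_restrict_compl_singleton (z := z) (by omega)).le
    (fun v => (deg_le v).trans (by omega)) (by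
      by_cases! hodd : ∃ v, deg (restrict G {z}ᶜ) v = 1 ∨ deg (restrict G {z}ᶜ) v = 3
      · exact .inl hodd
      · exact .inr fun v => by have := hodd v; have := deg_le v; omega)
  exact .of_le (by omega)

lemma ReducedConfig.bound_of_deg_le_four (hG : ReducedConfig G) (h₄ : ∀ v, deg G v ≤ 4) :
    PotentialBound G := by
  have deg_mem : ∀ v, deg G v = 0 ∨ deg G v = 3 ∨ deg G v = 4 := fun v => by
    have := hG.deg_mem v
    have := h₄ v
    omega
  by_cases! h₄₃ : ∃ z y, deg G z = 4 ∧ deg G y = 3 ∧ G.Adj z y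
  · obtain ⟨z, y, hz, hy, hzy⟩ := h₄₃
    exact hG.bound_of_deg_four_adj_deg_three hz hzy hy fun v _ => by have := h₄ v; omega
  by_cases! hz : ∃ z, deg G z = 4
  · obtain ⟨z, hz⟩ := hz
    refine hG.bound_of_deg_eq_zero_or_four (fun v => ?_) hz
    by_contra! hv
    obtain ⟨a, b, ha, hb, hab⟩ := hG.connected.exists_adj_of_deg_pos (fun v => deg G v = 4) hz
      (by omega) hv.2 (by omega)
    have := h₄₃ a b ha
    have := deg_mem b
    have := deg_pos.2 ⟨a, hab.symm⟩
    grind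
  have deg_eq : ∀ v, deg G v = 0 ∨ deg G v = 3 := fun v => by
    have := deg_mem v
    have := hz v
    omega
  by_cases! hz₃ : ∃ z, deg G z = 3
  · obtain ⟨z, hz₃⟩ := hz₃
    exact hG.bound_of_deg_eq_zero_or_three deg_eq hz₃
  · apply PotentialBound.of_le
    rw [transNum_eq_zero_of_deg_eq_zero fun v => (deg_eq v).resolve_right (hz₃ v)]
    simpa [potential] using Finset.sum_nonneg fun v _ => weight_nonneg (deg G v)

lemma ReducedConfig.bound_of_deg_five_adj_deg_four (hG : ReducedConfig G)
    (h₃ : ∀ v, deg G v ≠ 3) (hx : deg G x = 5) (hy : deg G y = 4) (hxy : G.Adj x y) :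
    PotentialBound G := by
  have hpot := potential_restrict_compl_singleton_add_le (P := {y}) (z := x) (m := 0)
    (by simp [hxy]) (fun v hv _ => hG.excess_one_nonneg hv)
  rw [Finset.sum_singleton, hx, hy, weight_five, excess_four_one] at hpot
  push_cast at hpot
  have tn_le := transNum_le_one_add_restrict G x
  have := deg_restrict_compl_singleton_of_adj hxy
  have := (hG.bound_restrict_compl_singleton (z := x) (by omega)).le_add_three
    ⟨y, .inr (by omega)⟩
  refine ⟨by omega, fun _ => by omega, fun ⟨v, hv⟩ => ?_, fun h => ?_⟩
  · have := hG.deg_mem v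
    have := h₃ v
    omega
  · have := h x
    omega

lemma ReducedConfig.bound_of_deg_eq_zero_or_five (hG : ReducedConfig G)
    (h : ∀ v, deg G v = 0 ∨ deg G v = 5) (hx : deg G x = 5) : PotentialBound G := by
  have hpot := potential_restrict_compl_singleton_add_le (P := ∅) (z := x) (m := 0) (by simp)
    (fun v hv _ => hG.excess_one_nonneg hv)
  rw [Finset.sum_empty, hx, weight_five] at hpot
  push_cast at hpot
  obtain ⟨v, hxv⟩ := deg_pos.1 (show 0 < deg G x by omega)
  have tn_le := transNum_le_one_add_restrict G x
  have := (hG.bound_restrict_compl_singleton (z := x) (by omega)).le_add_four (.inl ⟨v, by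
    have := deg_restrict_compl_singleton_of_adj hxv
    have := h v
    omega⟩)
  refine ⟨by omega, fun hcases => ?_, fun ⟨v, hv⟩ => ?_, fun h => ?_⟩
  · rcases hcases with ⟨v, hv⟩ | hdeg
    · have := h v
      omega
    · have := hdeg x
      omega
  · have := h v
    omega
  · have := h x
    omega

lemma ReducedConfig.bound_of_deg_ne_three (hG : ReducedConfig G) (h₃ : ∀ v, deg G v ≠ 3)
    (hx : deg G x = 5) : PotentialBound G := by
  by_cases! h₅₄ : ∃ a b, deg G a = 5 ∧ deg G b = 4 ∧ G.Adj a b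
  · obtain ⟨a, b, ha, hb, hab⟩ := h₅₄
    exact hG.bound_of_deg_five_adj_deg_four h₃ ha hb hab
  · refine hG.bound_of_deg_eq_zero_or_five (fun v => ?_) hx
    by_contra! hv
    obtain ⟨a, b, ha, hb, hab⟩ := hG.connected.exists_adj_of_deg_pos (fun v => deg G v = 5) hx
      (by omega) hv.2 (by omega)
    have := h₅₄ a b ha
    have := hG.deg_mem_of_adj hab
    have := h₃ b
    grind

lemma ReducedConfig.le_add_three_of_deg_five_adj_deg_three (hG : ReducedConfig G)
    (hx : deg G x = 5) (hy : deg G y = 3) (hxy : G.Adj x y) :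
    32 * (transNum G : ℤ) ≤ potential G + 3 := by
  have hpot := potential_restrict_compl_singleton_add_le (P := {y}) (z := x) (m := 0)
    (by simp [hxy]) (fun v hv _ => hG.excess_one_nonneg hv)
  rw [Finset.sum_singleton, hx, hy, weight_five, excess_three_one] at hpot
  push_cast at hpot
  have := transNum_le_one_add_restrict G x
  have := (hG.bound_restrict_compl_singleton (z := x) (by omega)).le_add_six
  omega

lemma ReducedConfig.le_add_three_of_deg_five_adj_deg_four_pair (hG : ReducedConfig G)
    (hx : deg G x = 5) (hy : deg G y = 4) (hz : deg G z = 4) (hxy : G.Adj x y) (hxz : G.Adj x z)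
    (hyz : y ≠ z) (hw : deg G w = 3) (hxw : ¬G.Adj x w) :
    32 * (transNum G : ℤ) ≤ potential G + 3 := by
  have hpot := potential_restrict_compl_singleton_add_le (P := {y, z}) (z := x) (m := 0)
    (by simp [hxy, hxz]) (fun v hv _ => hG.excess_one_nonneg hv)
  rw [Finset.sum_pair hyz, hx, hy, hz, weight_five, excess_four_one] at hpot
  push_cast at hpot
  have := transNum_le_one_add_restrict G x
  have := (hG.bound_restrict_compl_singleton (z := x) (by omega)).le_add_three
    ⟨w, .inr (by rw [deg_restrict_compl_singleton_of_not_adj (by rintro rfl; omega) hxw, hw])⟩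
  omega

end Triconnected

section Deletion

variable {V : Type*} {G : SimpleGraph V} {A D W : Finset V} {p q u v : V}

lemma degIn_eq_card (h : ∀ x ∈ D, G.Adj v x) : degIn G v D = D.card := by
  rw [degIn, Finset.filter_true_of_mem h]

variable [Fintype V]

lemma suppress_of_adj (hvp : v ≠ p) (hvq : v ≠ q) (hpq : G.Adj p q) :
    suppress G v p q = restrict G {v}ᶜ := by
  have := hpq.symm
  ext a b
  rw [suppress_adj, restrict_adj, Finset.mem_compl, Finset.mem_compl, Finset.mem_singleton,
    Finset.mem_singleton]
  grind

lemma restrict_compl_restrict_compl (G : SimpleGraph V) (S T : Finset V) :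
    restrict (restrict G Sᶜ) Tᶜ = restrict G (S ∪ T)ᶜ := by
  rw [restrict_restrict, Finset.compl_union]

lemma degIn_compl_eq_deg (h : ∀ x ∈ D, ¬G.Adj v x) : degIn G v Dᶜ = deg G v := by
  rw [← degIn_add_degIn_compl G v D, degIn_eq_zero.2 h, zero_add]

lemma ConnectedAvoiding.restrict_compl_self (h : ConnectedAvoiding G W) :
    ConnectedAvoiding (restrict G Wᶜ) ∅ := by
  obtain _ | ⟨⟨y⟩⟩ := isEmpty_or_nonempty V
  · exact fun S _ _ => .inl fun a => isEmptyElim a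
  · exact h.restrict_of_unique_attachment (y := y) disjoint_compl_left
      fun a _ b hb hbW => absurd (by simpa using hb) hbW

lemma MinimalConfig.restrict (h : MinimalConfig G) (hu : u ∉ A) (hpos : 0 < deg G u)
    (hA : ConnectedAvoiding (restrict G A) ∅) : MinimalConfig (restrict G A) :=
  ⟨fun H hH => h.bound_of_degSum_lt H (hH.trans (degSum_restrict_lt hu hpos)),
    fun v => (deg_restrict_le G A v).trans (h.deg_le v), hA⟩

end Deletion

section CounterConfig

variable {V : Type*} [Fintype V] {G : SimpleGraph V} {D F : Finset V}
  {p q r u v x y z : V}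

/-- A triconnected configuration that violates the bound `32 * transNum G ≤ potential G + 3`, with
an edge from a vertex `z` of degree four to a vertex `u` of degree three. The fields `deg_ne_three`
and `eq_of_deg_four` record what the deletion of a vertex of degree five then implies. -/
structure CounterConfig (G : SimpleGraph V) (z u : V) : Prop extends TriconnectedConfig G where
  lt_transNum : potential G + 3 < 32 * (transNum G : ℤ)
  deg_ne_three : ∀ x y, deg G x = 5 → G.Adj x y → deg G y ≠ 3
  eq_of_deg_four : ∀ x y y', deg G x = 5 → G.Adj x y → G.Adj x y' → deg G y = 4 →
    deg G y' = 4 → y = y'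
  deg_left : deg G z = 4
  deg_right : deg G u = 3
  adj : G.Adj z u

namespace CounterConfig

lemma deg_mem_of_adj_deg_five (h : CounterConfig G z u) (hx : deg G x = 5) (hxy : G.Adj x y) :
    deg G y = 4 ∨ deg G y = 5 :=
  (h.deg_mem_of_adj hxy).resolve_left (h.deg_ne_three x y hx hxy)

lemma excess_nonneg (h : CounterConfig G z u) (hD : ∀ d ∈ D, d ≠ z → deg G d = 5) (v : V) :
    0 ≤ excess (deg G v) (degIn G v D) := by
  refine K4Transversal.excess_nonneg (h.deg_mem v) ?_ (degIn_le_deg G v D)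
  obtain hv | hv | hv | hv := h.deg_mem v
  · exact .inl (by have := degIn_le_deg G v D; omega)
  · refine .inl ((degIn_le_card_of_forall_mem (T := {z}) fun d hd hvd => ?_).trans (by simp))
    by_contra hdz
    exact h.deg_ne_three d v (hD d hd (by simpa using hdz)) hvd.symm hv
  · exact .inr (.inl hv)
  · exact .inr (.inr hv)

lemma potential_restrict_compl_add_le (h : CounterConfig G z u)
    (hD : ∀ d ∈ D, d ≠ z → deg G d = 5) (hF : F ⊆ Dᶜ) :
    potential (restrict G Dᶜ) + ∑ x ∈ D, (weight (deg G x) + 3 * (degIn G x Dᶜ : ℤ)) +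
      ∑ v ∈ F, excess (deg G v) (degIn G v D) ≤ potential G := by
  have := potential_restrict_add_le G hF fun v _ _ => by
    rw [compl_compl]
    exact h.excess_nonneg hD v
  rwa [compl_compl] at this

lemma excess_lt_of_independent (h : CounterConfig G z u) (hD : ∀ d ∈ D, deg G d = 5)
    (hind : ∀ a ∈ D, ∀ b ∈ D, ¬G.Adj a b) (hx : x ∈ D)
    (hconn : ConnectedAvoiding (restrict G Dᶜ) ∅) (hv : v ∉ D) :
    excess (deg G v) (degIn G v D) < 2 * D.card := by
  have hpot := h.potential_restrict_compl_add_le (F := {v}) (fun d hd _ => hD d hd)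
    (by simpa using hv)
  have sum_weight : ∑ x ∈ D, (weight (deg G x) + 3 * (degIn G x Dᶜ : ℤ)) = 30 * D.card := by
    rw [Finset.sum_congr rfl fun x hx => show _ = (30 : ℤ) by
      rw [degIn_compl_eq_deg (hind x hx), hD x hx, weight_five]; norm_num]
    simp [mul_comm]
  have deg_u : deg (restrict G Dᶜ) u = 3 := by
    have hu : u ∉ D := fun hu => by
      have := hD u hu
      have := h.deg_right
      omega
    rw [deg_restrict, if_pos (Finset.mem_compl.2 hu), degIn_compl_eq_deg fun x hx hux =>
      h.deg_ne_three x u (hD x hx) hux.symm h.deg_right, h.deg_right]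
  have bound := (h.bound_restrict (u := x) (A := Dᶜ) (by simpa using hx)
    (by rw [hD x hx]; norm_num) hconn).le_add_three ⟨u, .inr deg_u⟩
  have := transNum_le_card_add_restrict G D
  have := h.lt_transNum
  rw [sum_weight, Finset.sum_singleton] at hpot
  omega

lemma adj_of_adj_of_adj (h : CounterConfig G z u) (hp : deg G p = 5) (hq : deg G q = 5)
    (hzp : G.Adj z p) (hzq : G.Adj z q) (hpq : p ≠ q) : G.Adj p q := by
  by_contra hn
  have := h.excess_lt_of_independent (D := {p, q}) (x := p) (v := z) (by simp [hp, hq])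
    (by simp [hn, G.adj_comm q p]) (by simp) (h.connected_pair p q).restrict_compl_self
    (by simp [hzp.ne, hzq.ne])
  rw [degIn_eq_card (by simp [hzp, hzq]), Finset.card_pair hpq, h.deg_left] at this
  norm_num [excess] at this

lemma reducedConfig_restrict (h : CounterConfig G z u) (hp : deg G p = 5) :
    ReducedConfig (restrict G {p}ᶜ) ∧
      potential (restrict G {p}ᶜ) < 32 * (transNum (restrict G {p}ᶜ) : ℤ) := by
  have hpot := potential_restrict_compl_singleton_add_le (P := ∅) (z := p) (m := 0) (by simp)
    (fun v hv _ => h.excess_one_nonneg hv)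
  rw [Finset.sum_empty, hp, weight_five] at hpot
  push_cast at hpot
  have tn_le := transNum_le_one_add_restrict G p
  have lt_tn := h.lt_transNum
  have lt_restrict : potential (restrict G {p}ᶜ) < 32 * (transNum (restrict G {p}ᶜ) : ℤ) := by
    omega
  have minimal : MinimalConfig (restrict G {p}ᶜ) :=
    h.toMinimalConfig.restrict (u := p) (by simp) (by omega)
      (by simpa using (h.connected_singleton p).restrict_compl_self)
  have connected : ∀ x, ConnectedAvoiding (restrict G {p}ᶜ) {x} := fun x =>
    (h.connected_pair p x).restrict_compl
  have deg_restrict : ∀ v, deg (restrict G {p}ᶜ) v = 0 ∨ 3 ≤ deg (restrict G {p}ᶜ) v := by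
    intro v
    by_cases hvp : v = p
    · exact .inl (hvp ▸ deg_restrict_compl_singleton_self)
    by_cases hpv : G.Adj p v
    · have := deg_restrict_compl_singleton_of_adj hpv
      have := h.deg_mem_of_adj_deg_five hp hpv
      omega
    · rw [deg_restrict_compl_singleton_of_not_adj hvp hpv]
      exact h.deg_eq_zero_or v
  refine ⟨⟨minimal, connected, deg_restrict, ?_⟩, lt_restrict⟩
  by_contra hcrit
  exact lt_restrict.not_ge (minimal.le_potential_of_not_isCritical connected deg_restrict hcrit)

lemma connectedAvoiding_restrict_triple (h : CounterConfig G z u) (hp : deg G p = 5) (q r : V) :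
    ConnectedAvoiding (restrict G {p, q, r}ᶜ) ∅ := by
  obtain ⟨hred, hlt⟩ := h.reducedConfig_restrict hp
  have hqr : ConnectedAvoiding (restrict G {p}ᶜ) {q, r} := by
    obtain rfl | hne := eq_or_ne q r
    · simpa using hred.connected_singleton q
    · by_contra hc
      exact hlt.not_ge (hred.le_potential_of_not_connectedAvoiding hne hc)
  have := hqr.restrict_compl_self
  rwa [restrict_compl_restrict_compl, ← Finset.insert_eq] at this

lemma exists_adj_of_triple (h : CounterConfig G z u) (hy : deg G y = 5)
    (hD : ∀ d ∈ D, deg G d = 5) (hyD : ∀ d ∈ D, G.Adj y d) (hcard : D.card = 3) :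
    ∃ s ∈ D, ∃ t ∈ D, G.Adj s t := by
  by_contra! hind
  have hy_notMem : y ∉ D := fun hmem => G.irrefl (hyD y hmem)
  obtain ⟨a, b, c, -, -, -, rfl⟩ := Finset.card_eq_three.1 hcard
  have := h.excess_lt_of_independent hD hind (x := a) (by simp)
    (h.connectedAvoiding_restrict_triple (hD a (by simp)) b c) hy_notMem
  rw [degIn_eq_card hyD, hcard, hy] at this
  norm_num [excess] at this

end CounterConfig

end CounterConfig

section FanConfig

variable {V : Type*} [Fintype V] {G : SimpleGraph V} {o p q s t u x y z : V}

/-- The last configuration to be excluded: the vertex `y` has degree five, its neighbours are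
`z, s, t, p, q`, all of degree five except for `z`, there is an edge from `s` to `t`, and at most
one edge among `z, p, q`. -/
structure FanConfig (G : SimpleGraph V) (z u y s t p q : V) : Prop extends CounterConfig G z u where
  nodup : [z, s, t, p, q].Nodup
  adj_iff : ∀ x, G.Adj y x ↔ x = z ∨ x = s ∨ x = t ∨ x = p ∨ x = q
  deg_hub : deg G y = 5
  deg_nbr : ∀ x, G.Adj y x → x ≠ z → deg G x = 5
  adj_st : G.Adj s t
  not_adj_zp_zq : ¬(G.Adj z p ∧ G.Adj z q)
  not_adj_zp_pq : ¬(G.Adj z p ∧ G.Adj p q)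
  not_adj_zq_pq : ¬(G.Adj z q ∧ G.Adj p q)

lemma four_le_excess_or {i j : ℕ} (h : i = 1 ∧ i + j = 3 ∨ (1 ≤ i ∧ i ≤ 3) ∧ i + j = 4 ∨
    (2 ≤ i ∧ i ≤ 4) ∧ i + j = 5) :
    4 ≤ excess (i + j) i ∨ 1 ≤ excess (i + j) i ∧ (j = 1 ∨ j = 3) := by
  obtain ⟨rfl, hj⟩ | ⟨⟨hi, hi'⟩, hj⟩ | ⟨⟨hi, hi'⟩, hj⟩ := h
  · rw [hj]
    norm_num [excess]
  all_goals
    rw [hj]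
    interval_cases i <;> norm_num [excess] <;> omega

namespace FanConfig

lemma nodup_all (h : FanConfig G z u y s t p q) : [y, z, s, t, p, q, u].Nodup := by
  have nodup := h.nodup
  have adj_iff := h.adj_iff
  have deg_nbr := h.deg_nbr
  have := h.deg_left
  have := h.deg_right
  have := h.deg_hub
  have := G.irrefl (v := y)
  simp only [List.nodup_cons, List.mem_cons, List.not_mem_nil, List.nodup_nil] at nodup ⊢
  grind

lemma adj_hub (h : FanConfig G z u y s t p q) : G.Adj y z ∧ G.Adj y p ∧ G.Adj y q := by
  simp [h.adj_iff]

lemma deg_rim (h : FanConfig G z u y s t p q) : deg G p = 5 ∧ deg G q = 5 := by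
  have nodup := by simpa using h.nodup_all
  exact ⟨h.deg_nbr p h.adj_hub.2.1 (by grind), h.deg_nbr q h.adj_hub.2.2 (by grind)⟩

lemma degIn_eq (h : FanConfig G z u y s t p q) (x : V) : degIn G x {y, p, z, q} =
    (if G.Adj x q then 1 else 0) + (if G.Adj x z then 1 else 0) + (if G.Adj x p then 1 else 0) +
      (if G.Adj x y then 1 else 0) := by
  have nodup := by simpa using h.nodup_all
  rw [degIn_insert G x (by grind), degIn_insert G x (by grind), degIn_insert G x (by grind),
    degIn_singleton]

lemma deg_eq_five (h : FanConfig G z u y s t p q) :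
    ∀ d ∈ ({y, p, z, q} : Finset V), d ≠ z → deg G d = 5 := by
  have := h.deg_hub
  have := h.deg_rim
  grind

lemma suppress_restrict (h : FanConfig G z u y s t p q) :
    suppress (restrict G {p, z, q}ᶜ) y s t = restrict G {y, p, z, q}ᶜ := by
  have nodup := by simpa using h.nodup_all
  have adj_restrict : (restrict G {p, z, q}ᶜ).Adj s t :=
    ⟨h.adj_st, by grind [Finset.mem_compl], by grind [Finset.mem_compl]⟩
  rw [suppress_of_adj (by grind) (by grind) adj_restrict, restrict_compl_restrict_compl,
    Finset.union_comm, ← Finset.insert_eq]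

lemma adj_restrict_iff (h : FanConfig G z u y s t p q) (x : V) :
    (restrict G {p, z, q}ᶜ).Adj y x ↔ x = s ∨ x = t := by
  have nodup := by simpa using h.nodup_all
  rw [restrict_adj, h.adj_iff]
  grind [Finset.mem_compl]

lemma connectedAvoiding_restrict (h : FanConfig G z u y s t p q) :
    ConnectedAvoiding (restrict G {y, p, z, q}ᶜ) ∅ :=
  h.suppress_restrict ▸ (h.connectedAvoiding_restrict_triple h.deg_rim.1 z q).suppress
    h.adj_restrict_iff h.adj_st.ne

/-- Once `p`, `z` and `q` are deleted, the neighbours `s` and `t` of `y` are adjacent, so that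
deleting `y` as well does not reduce `transNum`. -/
lemma transNum_le (h : FanConfig G z u y s t p q) :
    transNum G ≤ 3 + transNum (restrict G {y, p, z, q}ᶜ) := by
  have tn_le := transNum_le_card_add_restrict G {p, z, q}
  have tn_suppress := transNum_le_suppress fun x => (h.adj_restrict_iff x).1
  rw [h.suppress_restrict] at tn_suppress
  have := Finset.card_le_three (a := p) (b := z) (c := q)
  omega

lemma sum_degIn_compl (h : FanConfig G z u y s t p q) :
    11 ≤ ∑ x ∈ {y, p, z, q}, degIn G x {y, p, z, q}ᶜ := by
  have nodup := by simpa using h.nodup_all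
  rw [Finset.sum_insert (by grind), Finset.sum_insert (by grind), Finset.sum_insert (by grind),
    Finset.sum_singleton]
  have deg_y := degIn_add_degIn_compl G y {y, p, z, q}
  have deg_p := degIn_add_degIn_compl G p {y, p, z, q}
  have deg_z := degIn_add_degIn_compl G z {y, p, z, q}
  have deg_q := degIn_add_degIn_compl G q {y, p, z, q}
  obtain ⟨hyz, hyp, hyq⟩ := h.adj_hub
  rw [h.degIn_eq, h.deg_hub, if_neg G.irrefl, if_pos hyz, if_pos hyp, if_pos hyq] at deg_y
  rw [h.degIn_eq, h.deg_rim.1, if_neg G.irrefl, if_pos hyp.symm, G.adj_comm p z] at deg_p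
  rw [h.degIn_eq, h.deg_left, if_neg G.irrefl, if_pos hyz.symm] at deg_z
  rw [h.degIn_eq, h.deg_rim.2, if_neg G.irrefl, if_pos hyq.symm, G.adj_comm q z,
    G.adj_comm q p] at deg_q
  have := h.not_adj_zp_zq
  have := h.not_adj_zp_pq
  have := h.not_adj_zq_pq
  split_ifs at deg_p deg_z deg_q <;> first | omega | simp_all

lemma exists_adj (h : FanConfig G z u y s t p q) :
    ∃ o, G.Adj z o ∧ o ≠ u ∧ o ∉ ({y, p, z, q} : Finset V) := by
  by_contra! hno
  have := by simpa using h.nodup_all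
  have degIn_le : degIn G z {y, p, z, q} ≤ 2 := by
    rw [h.degIn_eq, if_neg G.irrefl]
    have := h.not_adj_zp_zq
    split_ifs <;> simp_all
  have degIn_compl_le : degIn G z {y, p, z, q}ᶜ ≤ 1 :=
    (degIn_le_card_of_forall_mem (T := {u}) fun x hx hzx => by
      have := hno x hzx
      grind [Finset.mem_compl]).trans (by simp)
  have := degIn_add_degIn_compl G z {y, p, z, q}
  have := h.deg_left
  omega

lemma degIn_cases (h : FanConfig G z u y s t p q) (hzo : G.Adj z o)
    (ho : o ∉ ({y, p, z, q} : Finset V)) :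
    degIn G o {y, p, z, q} = 1 ∧ deg G o = 3 ∨
      (1 ≤ degIn G o {y, p, z, q} ∧ degIn G o {y, p, z, q} ≤ 3) ∧ deg G o = 4 ∨
      (2 ≤ degIn G o {y, p, z, q} ∧ degIn G o {y, p, z, q} ≤ 4) ∧ deg G o = 5 := by
  have degIn_o := h.degIn_eq o
  rw [if_pos hzo.symm] at degIn_o
  obtain ho₃ | ho₄ | ho₅ := h.deg_mem_of_adj hzo
  · have not_adj : ∀ d, deg G d = 5 → ¬G.Adj o d := fun d hd hod =>
      h.deg_ne_three d o hd hod.symm ho₃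
    rw [if_neg (not_adj q h.deg_rim.2), if_neg (not_adj p h.deg_rim.1),
      if_neg (not_adj y h.deg_hub)] at degIn_o
    omega
  · have not_adj : ¬G.Adj o y := fun hoy => by
      have := h.eq_of_deg_four y o z h.deg_hub hoy.symm h.adj_hub.1 ho₄ h.deg_left
      grind
    rw [if_neg not_adj] at degIn_o
    split_ifs at degIn_o <;> omega
  · have hyo : G.Adj y o :=
      h.adj_of_adj_of_adj h.deg_hub ho₅ h.adj_hub.1.symm hzo (by grind)
    rw [if_pos hyo.symm] at degIn_o
    split_ifs at degIn_o <;> omega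

lemma false (h : FanConfig G z u y s t p q) : False := by
  obtain ⟨o, hzo, hou, ho⟩ := h.exists_adj
  have nodup := by simpa using h.nodup_all
  have not_adj : ∀ d, deg G d = 5 → ¬G.Adj u d := fun d hd hud =>
    h.deg_ne_three d u hd hud.symm h.deg_right
  have degIn_u : degIn G u {y, p, z, q} = 1 := by
    rw [h.degIn_eq, if_neg (not_adj q h.deg_rim.2), if_neg (not_adj p h.deg_rim.1),
      if_neg (not_adj y h.deg_hub), if_pos h.adj.symm]
  have hpot := h.potential_restrict_compl_add_le (F := {u, o}) h.deg_eq_five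
    (by grind [Finset.mem_compl])
  have sum_weight : ∑ x ∈ {y, p, z, q}, weight (deg G x) = 57 := by
    rw [Finset.sum_insert (by grind), Finset.sum_insert (by grind), Finset.sum_insert (by grind),
      Finset.sum_singleton, h.deg_hub, h.deg_rim.1, h.deg_rim.2, h.deg_left]
    norm_num
  rw [Finset.sum_add_distrib, ← Finset.mul_sum, sum_weight, Finset.sum_pair hou.symm, h.deg_right,
    degIn_u, excess_three_one] at hpot
  have sum_degIn : (11 : ℤ) ≤ ∑ x ∈ {y, p, z, q}, (degIn G x {y, p, z, q}ᶜ : ℤ) := by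
    exact_mod_cast h.sum_degIn_compl
  have bound := h.bound_restrict (u := y) (by simp) (by rw [h.deg_hub]; norm_num)
    h.connectedAvoiding_restrict
  have deg_o : deg (restrict G {y, p, z, q}ᶜ) o = degIn G o {y, p, z, q}ᶜ := by
    rw [deg_restrict, if_pos (Finset.mem_compl.2 ho)]
  have tn_le := h.transNum_le
  have lt_tn := h.lt_transNum
  have hcases := h.degIn_cases hzo ho
  rw [← degIn_add_degIn_compl G o {y, p, z, q}] at hcases hpot
  obtain hex | ⟨hex, hodd⟩ := four_le_excess_or hcases
  · have := bound.le_add_six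
    omega
  · have := bound.le_add_three ⟨o, by rwa [deg_o]⟩
    omega

end FanConfig

end FanConfig

section MainInduction

variable {V : Type*} [Fintype V] {G : SimpleGraph V} {N : Finset V} {u x y z : V}

namespace CounterConfig

lemma exists_adj_deg_five (h : CounterConfig G z u) : ∃ y, G.Adj z y ∧ deg G y = 5 := by
  by_contra! h₅
  have := (h.bound_of_deg_four_adj_deg_three h.deg_left h.adj h.deg_right h₅).le_add_three
    ⟨u, .inr h.deg_right⟩
  have := h.lt_transNum
  omega

lemma exists_nbrs_eq_insert (h : CounterConfig G z u) (hzy : G.Adj z y) (hy : deg G y = 5) :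
    ∃ N : Finset V, (∀ x, G.Adj y x ↔ x = z ∨ x ∈ N) ∧ z ∉ N ∧ N.card = 4 ∧
      ∀ x ∈ N, deg G x = 5 := by
  refine ⟨({x | G.Adj y x} : Finset V).erase z, fun x => ?_, by simp, ?_, fun x hx => ?_⟩
  · by_cases hxz : x = z
    · simp [hxz, hzy.symm]
    · simp [hxz]
  · rw [Finset.card_erase_of_mem (by simpa using hzy.symm)]
    exact congrArg (· - 1) hy
  · obtain ⟨hxz, hyx⟩ : x ≠ z ∧ G.Adj y x := by simpa using hx
    exact (h.deg_mem_of_adj_deg_five hy hyx).resolve_left fun hx₄ =>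
      hxz (h.eq_of_deg_four y x z hy hyx hzy.symm hx₄ h.deg_left)

lemma degIn_le_two (h : CounterConfig G z u) (hzy : G.Adj z y) (hy : deg G y = 5) (hyN : y ∉ N)
    (hN : ∀ x ∈ N, deg G x = 5) : degIn G z N ≤ 2 := by
  have huN : u ∉ N := fun huN => by
    have := hN u huN
    have := h.deg_right
    omega
  have huy : u ≠ y := by
    rintro rfl
    have := h.deg_right
    omega
  have := degIn_le_deg G z (insert y (insert u N))
  rw [degIn_insert G z (by simp [hyN, huy.symm]), degIn_insert G z huN, if_pos hzy,
    if_pos h.adj, h.deg_left] at this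
  omega

lemma exists_edge_of_nbrs (h : CounterConfig G z u) (hN : ∀ x ∈ N, deg G x = 5)
    (hzN : degIn G z N ≤ 2) (hedge : ∃ s ∈ N, ∃ t ∈ N, G.Adj s t) :
    ∃ s ∈ N, ∃ t ∈ N, G.Adj s t ∧ ∀ p ∈ N \ {s, t}, ∀ q ∈ N \ {s, t}, p ≠ q → G.Adj z p →
      ¬G.Adj z q ∧ ¬G.Adj p q := by
  by_cases! hpair : ∃ s ∈ N, ∃ t ∈ N, s ≠ t ∧ G.Adj z s ∧ G.Adj z t
  · obtain ⟨s, hs, t, ht, hst, hzs, hzt⟩ := hpair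
    refine ⟨s, hs, t, ht, h.adj_of_adj_of_adj (hN s hs) (hN t ht) hzs hzt hst,
      fun p hp q _ _ hzp => ?_⟩
    have := degIn_mono G z (show {s, t, p} ⊆ N by grind)
    rw [degIn_eq_card (by simp [hzs, hzt, hzp]), Finset.card_eq_three.2
      ⟨s, t, p, hst, by grind, by grind, rfl⟩] at this
    omega
  by_cases! hnbr : ∃ s ∈ N, G.Adj z s ∧ ∃ t ∈ N, G.Adj s t
  · obtain ⟨s, hs, hzs, t, ht, hst⟩ := hnbr
    exact ⟨s, hs, t, ht, hst, fun p hp q _ _ hzp =>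
      absurd hzp (hpair s hs p (by grind) (by grind) hzs)⟩
  · obtain ⟨s, hs, t, ht, hst⟩ := hedge
    exact ⟨s, hs, t, ht, hst, fun p hp q hq hpq hzp =>
      ⟨hpair p (by grind) q (by grind) hpq hzp, hnbr p (by grind) hzp q (by grind)⟩⟩

lemma false (h : CounterConfig G z u) : False := by
  obtain ⟨y, hzy, hy⟩ := h.exists_adj_deg_five
  obtain ⟨N, adj_iff, hzN, hcard, hN⟩ := h.exists_nbrs_eq_insert hzy hy
  have degIn_z : degIn G z N ≤ 2 := h.degIn_le_two hzy hy
    (fun hyN => G.irrefl ((adj_iff y).2 (.inr hyN))) hN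
  have hedge : ∃ s ∈ N, ∃ t ∈ N, G.Adj s t := by
    obtain ⟨D, hDN, hD⟩ := Finset.exists_subset_card_eq (show 3 ≤ N.card by omega)
    obtain ⟨s, hs, t, ht, hst⟩ := h.exists_adj_of_triple hy (fun d hd => hN d (hDN hd))
      (fun d hd => (adj_iff d).2 (.inr (hDN hd))) hD
    exact ⟨s, hDN hs, t, hDN ht, hst⟩
  obtain ⟨s, hs, t, ht, hst, hsparse⟩ := h.exists_edge_of_nbrs hN degIn_z hedge
  obtain ⟨p, q, hpq, hrest⟩ := Finset.card_eq_two.1 <| show (N \ {s, t}).card = 2 by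
    rw [Finset.card_sdiff_of_subset (by grind), Finset.card_pair hst.ne, hcard]
  have mem_iff (x : V) : x ∈ N ↔ x = s ∨ x = t ∨ x = p ∨ x = q := by
    grind
  have nodup : [z, s, t, p, q].Nodup := by
    have := hst.ne
    simp only [List.nodup_cons, List.mem_cons, List.not_mem_nil, List.nodup_nil]
    grind
  have fan : FanConfig G z u y s t p q :=
    { h with
      nodup
      adj_iff := by simpa only [mem_iff] using adj_iff
      deg_hub := hy
      deg_nbr := fun x hyx hxz => hN x (((adj_iff x).1 hyx).resolve_left hxz)
      adj_st := hst
      not_adj_zp_zq := fun ⟨hzp, hzq⟩ => (hsparse p (by grind) q (by grind) hpq hzp).1 hzq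
      not_adj_zp_pq := fun ⟨hzp, hadj⟩ => (hsparse p (by grind) q (by grind) hpq hzp).2 hadj
      not_adj_zq_pq := fun ⟨hzq, hadj⟩ =>
        (hsparse q (by grind) p (by grind) hpq.symm hzq).2 hadj.symm }
  exact fan.false

end CounterConfig

lemma TriconnectedConfig.bound (hG : TriconnectedConfig G) : PotentialBound G := by
  by_cases! h₄ : ∀ v, deg G v ≤ 4
  · exact hG.bound_of_deg_le_four h₄
  obtain ⟨x, hx⟩ := h₄
  have hx₅ : deg G x = 5 := by
    have := hG.deg_le x
    omega
  by_cases! h₃ : ∀ v, deg G v ≠ 3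
  · exact hG.bound_of_deg_ne_three h₃ hx₅
  obtain ⟨w, hw⟩ := h₃
  refine .of_le_add_three ?_ fun hle => absurd (hle x) hx.not_ge
  by_contra! hlt
  have deg_ne_three (x y : V) (hx : deg G x = 5) (hxy : G.Adj x y) : deg G y ≠ 3 := fun hy =>
    hlt.not_ge (hG.le_add_three_of_deg_five_adj_deg_three hx hy hxy)
  have eq_of_deg_four (x y y' : V) (hx : deg G x = 5) (hxy : G.Adj x y) (hxy' : G.Adj x y')
      (hy : deg G y = 4) (hy' : deg G y' = 4) : y = y' := by
    by_contra hne
    exact hlt.not_ge (hG.le_add_three_of_deg_five_adj_deg_four_pair hx hy hy' hxy hxy' hne hw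
      fun hxw => deg_ne_three x w hx hxw hw)
  obtain ⟨a, b, ha, hb, hab⟩ := hG.connected.exists_adj_of_deg_pos (fun v => deg G v = 3) hw
    (by omega) (y := x) (by omega) (by omega)
  have hb₄ : deg G b = 4 :=
    ((hG.deg_mem_of_adj hab).resolve_left hb).resolve_right fun hb₅ =>
      deg_ne_three b a hb₅ hab.symm ha
  have counter : CounterConfig G b a :=
    { hG with
      lt_transNum := hlt
      deg_ne_three
      eq_of_deg_four
      deg_left := hb₄
      deg_right := ha
      adj := hab.symm }
  exact counter.false

lemma ReducedConfig.bound (hG : ReducedConfig G) : PotentialBound G := by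
  by_cases! hpair : ∀ x y, ConnectedAvoiding G {x, y}
  · exact TriconnectedConfig.bound ⟨hG, hpair⟩
  obtain ⟨x, y, hxy⟩ := hpair
  have hne : x ≠ y := by
    rintro rfl
    exact hxy (by simpa using hG.connected_singleton x)
  exact .of_le (hG.le_potential_of_not_connectedAvoiding hne hxy)

lemma MinimalConfig.bound (hG : MinimalConfig G) : PotentialBound G := by
  by_cases! h₁ : ∃ v, deg G v = 1
  · exact hG.bound_of_deg_eq_one h₁.choose_spec
  by_cases! h₂ : ∃ v, deg G v = 2
  · exact hG.bound_of_deg_eq_two h₂.choose_spec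
  have deg_eq_zero_or (v : V) : deg G v = 0 ∨ 3 ≤ deg G v := by
    have := h₁ v
    have := h₂ v
    omega
  by_cases hcrit : IsCritical G
  · by_cases! hconn : ∀ x, ConnectedAvoiding G {x}
    · exact ReducedConfig.bound ⟨hG, hconn, deg_eq_zero_or, hcrit⟩
    · exact hG.bound_of_cutVertex hcrit hconn.choose_spec
  · exact hG.bound_of_not_isCritical deg_eq_zero_or hcrit

theorem ConnectedAvoiding.potentialBound (G : SimpleGraph V) (hdeg : ∀ v, deg G v ≤ 5)
    (hG : ConnectedAvoiding G ∅) : PotentialBound G :=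
  MinimalConfig.bound ⟨fun H _ hH hconn => ConnectedAvoiding.potentialBound H hH hconn, hdeg, hG⟩
termination_by degSum G

lemma ConnectedAvoiding.minimalConfig (hG : ConnectedAvoiding G ∅) (hdeg : ∀ v, deg G v ≤ 5) :
    MinimalConfig G :=
  ⟨fun H _ hH hconn => hconn.potentialBound H hH, hdeg, hG⟩

end MainInduction

section Connected

variable {V : Type*} [Fintype V] {G : SimpleGraph V} {X : Finset V} {x : V}

lemma connectedAvoiding_of_induce_connected (h : (G.induce (X : Set V)ᶜ).Connected) :
    ConnectedAvoiding G X := by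
  intro S hSX hcut
  by_contra! ⟨⟨a, ha, -⟩, b, hbS, hbX, -⟩
  have hS : (S : Set V) ⊆ (X : Set V)ᶜ := fun c hc => by
    simpa using Finset.disjoint_left.1 hSX hc
  obtain ⟨p, hp, q, ⟨hqX, hqS⟩, hpq⟩ := (induce_connected_iff_forall_exists_adj.1 h).2 S hS
    ⟨a, ha⟩ ⟨b, by simpa using hbX, by simpa using hbS⟩
  exact hcut p (by simpa using hp) q (by simpa using hqS) (by simpa using hqX) hpq

lemma induce_connected_of_connectedAvoiding (hdeg : ∀ v, deg G v ≠ 0)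
    (hX : X.card < Fintype.card V) (h : ConnectedAvoiding G X) :
    (G.induce (X : Set V)ᶜ).Connected := by
  refine induce_connected_iff_forall_exists_adj.2 ⟨?_, fun S hS ⟨a, ha⟩ ⟨b, hbX, hbS⟩ => ?_⟩
  · obtain ⟨c, hc⟩ := Finset.exists_mem_notMem_of_card_lt_card (t := Finset.univ) hX
    exact ⟨c, by simpa using hc.2⟩
  by_contra! hcut
  obtain hzero | hzero := h S.toFinset
    (Finset.disjoint_left.2 fun c hc => by simpa using hS (by simpa using hc))
    (fun p hp q hq hqX => hcut p (by simpa using hp) q ⟨by simpa using hqX, by simpa using hq⟩)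
  · exact hdeg a (hzero a (by simpa using ha))
  · exact hdeg b (hzero b (by simpa using hbS) (by simpa using hbX))

lemma connectedAvoiding_empty (hdeg : ∀ v, deg G v ≠ 0)
    (h : ∀ x, ConnectedAvoiding G {x}) : ConnectedAvoiding G ∅ := by
  intro S _ hcut
  by_contra! ⟨⟨a, ha, -⟩, b, hbS, -, -⟩
  obtain ⟨c, hac⟩ := deg_pos.1 (Nat.pos_of_ne_zero (hdeg a))
  have hcS : c ∈ S := by
    by_contra hc
    exact hcut a ha c hc (by simp) hac
  rcases h a (S.erase a) (by simp) (fun p hp q hq hqa hpq =>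
    hcut p (by grind) q (by grind) (by simp) hpq) with hzero | hzero
  · exact hdeg c (hzero c (by grind [hac.ne']))
  · exact hdeg b (hzero b (by grind) (by grind))

lemma reducedConfig_of_connected (hdeg : ∀ v, deg G v ∈ ({3, 4, 5} : Set ℕ))
    (hconn : ∀ v, (G.induce {u | u ≠ v}).Connected) (hcrit : IsCritical G) : ReducedConfig G := by
  have deg_mem (v : V) : deg G v = 3 ∨ deg G v = 4 ∨ deg G v = 5 := by simpa using hdeg v
  have connected_singleton (x : V) : ConnectedAvoiding G {x} :=
    connectedAvoiding_of_induce_connected (by rw [Finset.coe_singleton]; exact hconn x)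
  have connected : ConnectedAvoiding G ∅ :=
    connectedAvoiding_empty (fun v => by grind) connected_singleton
  exact ⟨connected.minimalConfig fun v => by grind, connected_singleton, fun v => by grind, hcrit⟩

end Connected

end K4Transversal

/-- If `G` is reduced (2-connected, critical, all degrees in {3,4,5}) but not
3-connected (it has a 2-cutset), then `φ(G) ≥ (16/3)·s(G)`. -/
theorem statement14 {V : Type*} [Fintype V] (G : SimpleGraph V)
    (hcard : 3 ≤ Fintype.card V)
    (h2conn : ∀ v : V, (G.induce {u : V | u ≠ v}).Connected)
    (hcrit : ∀ e ∈ G.edgeSet, transNum (G.deleteEdges {e}) < transNum G)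
    (hdeg : ∀ v : V, (G.neighborSet v).ncard ∈ ({3, 4, 5} : Set ℕ))
    (hcut : ∃ X : Finset V, X.card = 2 ∧ ¬ (G.induce ((↑X : Set V)ᶜ)).Connected) :
    phiSum G ≥ (16 / 3) * (transNum G : ℝ) := by
  have hG : K4Transversal.ReducedConfig G := K4Transversal.reducedConfig_of_connected
    (by simpa only [K4Transversal.ncard_neighborSet] using hdeg) h2conn hcrit
  obtain ⟨X, hX, hcut⟩ := hcut
  have hX_not_conn : ¬K4Transversal.ConnectedAvoiding G X :=
    mt (K4Transversal.induce_connected_of_connectedAvoiding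
      (fun v hv => by simpa [K4Transversal.ncard_neighborSet, hv] using hdeg v) (by omega)) hcut
  classical
  obtain ⟨u, v, huv, rfl⟩ := Finset.card_eq_two.1 hX
  have bound : (32 * transNum G : ℝ) ≤ K4Transversal.potential G := by
    exact_mod_cast hG.le_potential_of_not_connectedAvoiding huv hX_not_conn
  rw [K4Transversal.phiSum_eq_potential_div]
  linarith
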